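/- arXiv:2001.02470 — 2 statements merged into one kernel-verified Lean document; each statement's English description precedes it below -/
import Mathlib

section
/- Suppose a is contained in the Jacobson radical of R and cd(a,M) = ara(a,M). Then the following are equivalent: (i) M is a-relative quasi Buchsbaum; (ii) there exists an a-relative system of parameters of M contained in a² which is an a-weak sequence on M; (iii) a · H^i_a(M) = 0 for all 0 ≤ i < cd(a,M). -/
/-!
Formalization of a statement from "A theory of relative generalized Cohen-Macaulay modules"
by Divaani-Aazar, Ghanbari Doust, Tousi and Zakeri.

Throughout, `R` is a commutative Noetherian ring and `M` a finitely generated `R`-module.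
Conventions used below:
* `locH I i M` is the local cohomology module `H^i_I(M)` (Mathlib's `localCohomology`).
* Conditions `cd(I,M) = c`, `ara(I,M) = n`, `f_I(M) = f`, `grade(I,M) = r` are expressed by
  the predicates `IsCd`, `IsAra`, `IsFinDim`, `IsGrade`.
* Sequences are given as functions `Fin r → R`; `pSpan M x i = ⟨x_0,…,x_{i-1}⟩M`.
* Koszul (co)homology is defined via the explicit (co)chain complex on the `p`-element
  subsets of `{0,…,n-1}`, and the canonical map `λ^i` into local cohomology is the structure
  map (at exponent 1) into the direct limit of Koszul cohomologies of powers of the sequence,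
  which is the realization of `H^i_{⟨x⟩}(M)` used in the paper (2.1(iv)).
-/

open CategoryTheory

noncomputable section

variable {R : Type} [CommRing R]

/-! ### Sequences: prefix spans, weak sequences, filter regular sequences, d-sequences -/

/-- `pSpan M x i` is the submodule `⟨x_0, …, x_{i-1}⟩M` of `M`. -/
def pSpan (M : Type) [AddCommGroup M] [Module R M] {r : ℕ} (x : Fin r → R) (i : Fin r) :
    Submodule R M :=
  Ideal.span (x '' {j | j < i}) • (⊤ : Submodule R M)

/-- `x_1, …, x_r` is an `I`-weak sequence on `M`:
`(⟨x_1,…,x_{i-1}⟩M :_M x_i) ⊆ (⟨x_1,…,x_{i-1}⟩M :_M I)` for all `i`. -/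
def IsWeakSeq (I : Ideal R) (M : Type) [AddCommGroup M] [Module R M] {r : ℕ}
    (x : Fin r → R) : Prop :=
  ∀ i : Fin r, ∀ m : M, x i • m ∈ pSpan M x i → ∀ a ∈ I, a • m ∈ pSpan M x i

/-- `x_1, …, x_r` is an `I`-filter regular sequence on `M`:
`(⟨x_1,…,x_{i-1}⟩M :_M x_i) ⊆ ⋃ₜ (⟨x_1,…,x_{i-1}⟩M :_M I^t)` for all `i`. -/
def IsFilterRegSeq (I : Ideal R) (M : Type) [AddCommGroup M] [Module R M] {r : ℕ}
    (x : Fin r → R) : Prop :=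
  ∀ i : Fin r, ∀ m : M, x i • m ∈ pSpan M x i →
    ∃ t : ℕ, ∀ a ∈ I ^ t, a • m ∈ pSpan M x i

/-- An unconditioned `I`-filter regular sequence: filter regular in any order. -/
def IsUncondFilterRegSeq (I : Ideal R) (M : Type) [AddCommGroup M] [Module R M] {r : ℕ}
    (x : Fin r → R) : Prop :=
  ∀ σ : Equiv.Perm (Fin r), IsFilterRegSeq I M (x ∘ σ)

/-- An unconditioned `I`-weak sequence: all positive powers, in any order, form an
`I`-weak sequence. -/
def IsUncondWeakSeq (I : Ideal R) (M : Type) [AddCommGroup M] [Module R M] {r : ℕ}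
    (x : Fin r → R) : Prop :=
  ∀ σ : Equiv.Perm (Fin r), ∀ α : Fin r → ℕ, (∀ k, 0 < α k) →
    IsWeakSeq I M fun k => x (σ k) ^ α k

/-- `x_1, …, x_r` is a d-sequence on `M`:
`(⟨x_1,…,x_{i-1}⟩M :_M x_i x_j) = (⟨x_1,…,x_{i-1}⟩M :_M x_j)` for all `i ≤ j`. -/
def IsDSeq (M : Type) [AddCommGroup M] [Module R M] {r : ℕ} (x : Fin r → R) : Prop :=
  ∀ i j : Fin r, i ≤ j → ∀ m : M,
    ((x i * x j) • m ∈ pSpan M x i ↔ x j • m ∈ pSpan M x i)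

/-- An u.s.d-sequence on `M`: all positive powers, in any order, form a d-sequence. -/
def IsUSDSeq (M : Type) [AddCommGroup M] [Module R M] {r : ℕ} (x : Fin r → R) : Prop :=
  ∀ σ : Equiv.Perm (Fin r), ∀ α : Fin r → ℕ, (∀ k, 0 < α k) →
    IsDSeq M fun k => x (σ k) ^ α k

/-! ### Local cohomology, cohomological dimension, arithmetic rank -/

/-- The `i`-th local cohomology module `H^i_I(M)`. -/
abbrev locH (I : Ideal R) (i : ℕ) (M : Type) [AddCommGroup M] [Module R M] : ModuleCat R :=
  (localCohomology I i).obj (ModuleCat.of R M)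

/-- `cd(I, M) = c`: the cohomological dimension of `I` on `M` equals `c`, i.e.
`H^c_I(M) ≠ 0` and `H^i_I(M) = 0` for all `i > c`. -/
def IsCd (I : Ideal R) (M : Type) [AddCommGroup M] [Module R M] (c : ℕ) : Prop :=
  Nontrivial (locH I c M) ∧ ∀ i : ℕ, c < i → Subsingleton (locH I i M)

/-- `f_I(M) = f`: the `I`-finiteness dimension of `M` equals `f`, i.e. `f` is the least
integer such that `H^f_I(M)` is not finitely generated. -/
def IsFinDim (I : Ideal R) (M : Type) [AddCommGroup M] [Module R M] (f : ℕ) : Prop :=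
  (∀ i : ℕ, i < f → Module.Finite R (locH I i M)) ∧ ¬ Module.Finite R (locH I f M)

/-- `M` is `I`-relative generalized Cohen-Macaulay: `cd(I,M) ≤ 0` or `cd(I,M) = f_I(M)`. -/
def IsRelGCM (I : Ideal R) (M : Type) [AddCommGroup M] [Module R M] : Prop :=
  (∀ i : ℕ, 0 < i → Subsingleton (locH I i M)) ∨
    ∃ c : ℕ, IsCd I M c ∧ IsFinDim I M c

/-- `ara(I, M) = n`: the arithmetic rank of `I` with respect to `M` equals `n`, i.e. `n` is the
least integer such that there are `x_1, …, x_n ∈ R` with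
`Rad(⟨x_1,…,x_n⟩ + Ann M) = Rad(I + Ann M)`. -/
def IsAra (I : Ideal R) (M : Type) [AddCommGroup M] [Module R M] (n : ℕ) : Prop :=
  IsLeast {k : ℕ | ∃ x : Fin k → R,
    (Ideal.span (Set.range x) + Module.annihilator R M).radical
      = (I + Module.annihilator R M).radical} n

/-- `x_1, …, x_c` is an `I`-relative system of parameters of `M` (where `c = cd(I,M)`):
the `x_i` lie in `I` and `Rad(⟨x_1,…,x_c⟩ + Ann M) = Rad(I + Ann M)`. -/
def IsRsop (I : Ideal R) (M : Type) [AddCommGroup M] [Module R M] {c : ℕ}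
    (x : Fin c → R) : Prop :=
  (∀ j, x j ∈ I) ∧
    (Ideal.span (Set.range x) + Module.annihilator R M).radical
      = (I + Module.annihilator R M).radical

/-! ### Relative Buchsbaum and relative quasi Buchsbaum modules -/

/-- `M` is `I`-relative Buchsbaum: `cd(I,M) = ara(I,M)` and every `I`-relative system of
parameters of `M` is an `I`-weak sequence on `M`. -/
def IsRelBuchsbaum (I : Ideal R) (M : Type) [AddCommGroup M] [Module R M] : Prop :=
  ∃ c : ℕ, IsCd I M c ∧ IsAra I M c ∧
    ∀ x : Fin c → R, IsRsop I M x → IsWeakSeq I M x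

/-- `M` is `I`-relative quasi Buchsbaum: `cd(I,M) = ara(I,M)` and every `I`-relative system of
parameters of `M` contained in `I²` is an `I`-weak sequence on `M`. -/
def IsRelQuasiBuchsbaum (I : Ideal R) (M : Type) [AddCommGroup M] [Module R M] : Prop :=
  ∃ c : ℕ, IsCd I M c ∧ IsAra I M c ∧
    ∀ x : Fin c → R, IsRsop I M x → (∀ j, x j ∈ I ^ 2) → IsWeakSeq I M x

/-!
When `(0 :_M x)` is `I`-power torsion, there is a long exact sequence
`⋯ → H^i(M) → H^i(M/xM) → H^{i+1}(M) → ⋯` whose maps `H^{i+1}(M) → H^{i+1}(M)` are multiplication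
by `x`. Weak sequences and annihilation of local cohomology by `I` are therefore compared by
induction on the length, passing from `M` to `M/xM`. The assumption `x ∈ I²` enters twice.

* From weak sequences to annihilation, the long exact sequence shows that `x z = 0` implies
  `I z = 0` for `z ∈ H^i(M)`. If `x ^ (n + 2) z = 0`, two applications of this give
  `I² x ^ n z = 0`, hence `x ^ (n + 1) z = 0`. Since `z` is killed by some power of `x`, descending
  on the exponent yields `x z = 0`, and so `I z = 0`.
* From annihilation to weak sequences, the long exact sequence only gives `I² H^i(M/xM) = 0`. But
  writing `x = ∑ aⱼ bⱼ` with `aⱼ, bⱼ ∈ I` factors multiplication by `x` as `M → Mˢ → M`, where both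
  maps vanish on the relevant local cohomology, and this improves `I²` to `I`.
-/

universe u

variable {A : Type u} [CommRing A]

/-! ### Local cohomology as a direct limit -/

/-- The transition map `Ext^i(A/I^s, M) → Ext^i(A/I^t, M)` for `s ≤ t`. -/
abbrev LocCoh.transition (I : Ideal A) (i : ℕ) (M : Type u) [AddCommGroup M] [Module A M]
    (s t : ℕ) (h : s ≤ t) :
    Abelian.Ext.{u} (ModuleCat.of A (A ⧸ I ^ s)) (ModuleCat.of A M) i →ₗ[A]
      Abelian.Ext.{u} (ModuleCat.of A (A ⧸ I ^ t)) (ModuleCat.of A M) i :=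
  (Abelian.Ext.mk₀ (ModuleCat.ofHom
    (Submodule.factor (Ideal.pow_le_pow_right h)))).precompOfLinear A _ (zero_add i)

/-- The local cohomology module `H^i_I(M)`, as the direct limit of the modules `Ext^i(A/I^t, M)`.
These are the `Ext` groups of the derived category, which come with long exact sequences. -/
def LocCoh (I : Ideal A) (i : ℕ) (M : Type u) [AddCommGroup M] [Module A M] : Type u :=
  Module.DirectLimit
    (fun t => Abelian.Ext.{u} (ModuleCat.of A (A ⧸ I ^ t)) (ModuleCat.of A M) i)
    (LocCoh.transition I i M)

namespace LocCoh

variable {I : Ideal A} {i : ℕ}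
  {M : Type u} [AddCommGroup M] [Module A M] {N : Type u} [AddCommGroup N] [Module A N]
  {P : Type u} [AddCommGroup P] [Module A P]

instance : DirectedSystem
    (fun t => Abelian.Ext.{u} (ModuleCat.of A (A ⧸ I ^ t)) (ModuleCat.of A M) i)
    (transition I i M · · ·) where
  map_self s e := by
    have hid : ModuleCat.ofHom (Submodule.factor (le_refl (I ^ s))) = 𝟙 _ := by
      ext; rfl
    exact (congrArg (fun f => (Abelian.Ext.mk₀ f).comp e _) hid).trans (Abelian.Ext.mk₀_id_comp e)
  map_map r s t hrs hst e := by
    have hcomp : ModuleCat.ofHom (Submodule.factor (Ideal.pow_le_pow_right hst)) ≫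
        ModuleCat.ofHom (Submodule.factor (Ideal.pow_le_pow_right hrs)) =
          ModuleCat.ofHom (Submodule.factor (Ideal.pow_le_pow_right (I := I) (hrs.trans hst))) := by
      ext; rfl
    simp [← hcomp, ← Abelian.Ext.mk₀_comp_mk₀_assoc]

instance : AddCommGroup (LocCoh I i M) :=
  inferInstanceAs (AddCommGroup (Module.DirectLimit _ (transition I i M)))

instance : Module A (LocCoh I i M) :=
  inferInstanceAs (Module A (Module.DirectLimit _ (transition I i M)))

variable (I i M) in
/-- The structure map `Ext^i(A/I^t, M) → H^i_I(M)` of the direct limit. -/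
def of (t : ℕ) :
    Abelian.Ext.{u} (ModuleCat.of A (A ⧸ I ^ t)) (ModuleCat.of A M) i →ₗ[A] LocCoh I i M :=
  Module.DirectLimit.of A ℕ _ (transition I i M) t

lemma of_transition {s t : ℕ} (h : s ≤ t) (e) :
    of I i M t (transition I i M s t h e) = of I i M s e :=
  Module.DirectLimit.of_f

lemma exists_of (z : LocCoh I i M) : ∃ t e, of I i M t e = z :=
  Module.DirectLimit.exists_of z

lemma of_eq_zero_iff {t : ℕ} {e} :
    of I i M t e = 0 ↔ ∃ u, ∃ h : t ≤ u, transition I i M t u h e = 0 := by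
  refine ⟨fun h => Module.DirectLimit.of.zero_exact h, ?_⟩
  rintro ⟨u, h, he⟩
  rw [← of_transition h, he, map_zero]

variable (I) in
/-- The map `H^i_I(M) → H^k_I(N)` given by the Yoneda product with a class in `Ext^j(M, N)`. -/
def yoneda {j k : ℕ} (α : Abelian.Ext.{u} (ModuleCat.of A M) (ModuleCat.of A N) j)
    (h : i + j = k) : LocCoh I i M →ₗ[A] LocCoh I k N :=
  Module.DirectLimit.map (fun _ => α.postcompOfLinear A _ h) (by
    intro s t hst
    ext e
    exact Abelian.Ext.comp_assoc _ _ _ (zero_add i) h (by omega))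

@[simp]
lemma yoneda_of {j k : ℕ} (α : Abelian.Ext.{u} (ModuleCat.of A M) (ModuleCat.of A N) j)
    (h : i + j = k) (t : ℕ) (e) :
    yoneda I α h (of I i M t e) = of I k N t (e.comp α h) :=
  Module.DirectLimit.map_apply_of _ _ _

/-- Direct limits of exact sequences are exact. -/
lemma exact_yoneda {j k l p : ℕ}
    {α : Abelian.Ext.{u} (ModuleCat.of A M) (ModuleCat.of A N) j}
    {β : Abelian.Ext.{u} (ModuleCat.of A N) (ModuleCat.of A P) l}
    {h : i + j = k} {h' : k + l = p}
    (hex : ∀ X : ModuleCat.{u} A,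
      Function.Exact (α.postcomp X h) (β.postcomp X h')) :
    Function.Exact (yoneda I α h) (yoneda I β h') := by
  intro z
  obtain ⟨t, e, rfl⟩ := exists_of z
  constructor
  · rw [yoneda_of, of_eq_zero_iff]
    rintro ⟨u, htu, hu⟩
    have hzero : β.postcomp _ h' (transition I k N t u htu e) = 0 := by
      rw [← hu]
      exact Abelian.Ext.comp_assoc _ _ _ (zero_add k) h' (by omega)
    obtain ⟨e', he'⟩ := (hex _ _).1 hzero
    exact ⟨of I i M u e', by rw [yoneda_of, ← of_transition htu, ← he']; rfl⟩
  · rintro ⟨y, hy⟩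
    obtain ⟨u, e', rfl⟩ := exists_of y
    have hzero : β.postcomp _ h' (α.postcomp _ h e') = 0 := (hex _).apply_apply_eq_zero e'
    rw [← hy, yoneda_of, yoneda_of]
    exact (congrArg (of I p P u) hzero).trans (map_zero _)

variable (I i) in
/-- The map `H^i_I(M) → H^i_I(N)` induced by a linear map `M → N`. -/
def map (f : M →ₗ[A] N) : LocCoh I i M →ₗ[A] LocCoh I i N :=
  yoneda I (Abelian.Ext.mk₀ (ModuleCat.ofHom f)) (add_zero i)

@[simp]
lemma map_of (f : M →ₗ[A] N) (t : ℕ) (e) :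
    map I i f (of I i M t e) =
      of I i N t (e.comp (Abelian.Ext.mk₀ (ModuleCat.ofHom f)) (add_zero i)) :=
  yoneda_of _ _ _ _

lemma map_comp_apply (g : N →ₗ[A] P) (f : M →ₗ[A] N) (z : LocCoh I i M) :
    map I i (g ∘ₗ f) z = map I i g (map I i f z) := by
  obtain ⟨t, e, rfl⟩ := exists_of z
  simp only [map_of, ModuleCat.ofHom_comp, Abelian.Ext.comp_assoc_of_third_deg_zero,
    Abelian.Ext.mk₀_comp_mk₀]

lemma map_id_apply (z : LocCoh I i M) : map I i (LinearMap.id : M →ₗ[A] M) z = z := by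
  obtain ⟨t, e, rfl⟩ := exists_of z
  simp

lemma map_smul_apply (r : A) (f : M →ₗ[A] N) (z : LocCoh I i M) :
    map I i (r • f) z = r • map I i f z := by
  obtain ⟨t, e, rfl⟩ := exists_of z
  have hr : ModuleCat.ofHom (r • f) = r • ModuleCat.ofHom f := rfl
  simp [hr, Abelian.Ext.mk₀_smul]

lemma map_sum_apply {ι : Type*} [Fintype ι] (f : ι → (M →ₗ[A] N)) (z : LocCoh I i M) :
    map I i (∑ k, f k) z = ∑ k, map I i (f k) z := by
  obtain ⟨t, e, rfl⟩ := exists_of z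
  have hsum : ModuleCat.ofHom (∑ k, f k) = ∑ k, ModuleCat.ofHom (f k) :=
    ModuleCat.hom_ext (by simp [ModuleCat.hom_sum])
  simp [hsum, Abelian.Ext.mk₀_sum, Abelian.Ext.comp_sum]

lemma map_lsmul_apply (r : A) (z : LocCoh I i M) :
    map I i (LinearMap.lsmul A M r) z = r • z := by
  have hr : LinearMap.lsmul A M r = r • LinearMap.id := rfl
  rw [hr, map_smul_apply, map_id_apply]

lemma exists_pow_smul_eq_zero (z : LocCoh I i M) : ∃ t, ∀ r ∈ I ^ t, r • z = 0 := by
  obtain ⟨t, e, rfl⟩ := exists_of z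
  refine ⟨t, fun r hr => ?_⟩
  have hr' : r • 𝟙 (ModuleCat.of A (A ⧸ I ^ t)) = 0 := by
    ext
    exact (Submodule.Quotient.mk_eq_zero _).2 (by simpa using hr)
  have he : r • e = 0 := by
    rw [← Abelian.Ext.mk₀_id_comp e, ← Abelian.Ext.smul_comp, ← Abelian.Ext.mk₀_smul, hr',
      Abelian.Ext.mk₀_zero, Abelian.Ext.zero_comp]
  rw [← map_smul, he, map_zero]

lemma subsingleton_succ_of_injective [Module.Injective A M] :
    Subsingleton (LocCoh I (i + 1) M) := by
  have := Module.injective_object_of_injective_module A M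
  refine subsingleton_of_forall_eq 0 fun z => ?_
  obtain ⟨t, e, rfl⟩ := exists_of z
  rw [e.eq_zero_of_injective, map_zero]

section Connecting

variable {f : M →ₗ[A] N} {g : N →ₗ[A] P}

lemma shortExact_moduleCatMk (hf : Function.Injective f) (hfg : Function.Exact f g)
    (hg : Function.Surjective g) :
    (ShortComplex.moduleCatMk f g hfg.linearMap_comp_eq_zero).ShortExact :=
  ModuleCat.shortComplex_shortExact _ hfg hf hg

/-- The class in `Ext^1(P, M)` of a short exact sequence `0 → M → N → P → 0` of linear maps. -/
def extClass (hf : Function.Injective f) (hfg : Function.Exact f g)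
    (hg : Function.Surjective g) :
    Abelian.Ext.{u} (ModuleCat.of A P) (ModuleCat.of A M) 1 :=
  (shortExact_moduleCatMk hf hfg hg).extClass

variable (I i) in
/-- The connecting homomorphism `H^i_I(P) → H^{i+1}_I(M)` of a short exact sequence
`0 → M → N → P → 0`. -/
def connecting (hf : Function.Injective f) (hfg : Function.Exact f g)
    (hg : Function.Surjective g) : LocCoh I i P →ₗ[A] LocCoh I (i + 1) M :=
  yoneda I (extClass hf hfg hg) rfl

lemma exact_map_map (hf : Function.Injective f) (hfg : Function.Exact f g)
    (hg : Function.Surjective g) : Function.Exact (map I i f) (map I i g) :=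
  exact_yoneda fun X => (ShortComplex.ab_exact_iff_function_exact _).1
    (Abelian.Ext.covariant_sequence_exact₂' X (shortExact_moduleCatMk hf hfg hg) i)

lemma exact_map_connecting (hf : Function.Injective f) (hfg : Function.Exact f g)
    (hg : Function.Surjective g) :
    Function.Exact (map I i g) (connecting I i hf hfg hg) :=
  exact_yoneda fun X => (ShortComplex.ab_exact_iff_function_exact _).1
    (Abelian.Ext.covariant_sequence_exact₃' X (shortExact_moduleCatMk hf hfg hg) i (i + 1) rfl)

lemma exact_connecting_map (hf : Function.Injective f) (hfg : Function.Exact f g)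
    (hg : Function.Surjective g) :
    Function.Exact (connecting I i hf hfg hg) (map I (i + 1) f) :=
  exact_yoneda fun X => (ShortComplex.ab_exact_iff_function_exact _).1
    (Abelian.Ext.covariant_sequence_exact₁' X (shortExact_moduleCatMk hf hfg hg) i (i + 1) rfl)

lemma map_connecting {M' N' P' : Type u} [AddCommGroup M'] [Module A M'] [AddCommGroup N']
    [Module A N'] [AddCommGroup P'] [Module A P'] {f' : M' →ₗ[A] N'} {g' : N' →ₗ[A] P'}
    (hf : Function.Injective f) (hfg : Function.Exact f g) (hg : Function.Surjective g)
    (hf' : Function.Injective f') (hfg' : Function.Exact f' g') (hg' : Function.Surjective g')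
    {α : M →ₗ[A] M'} {β : N →ₗ[A] N'} {γ : P →ₗ[A] P'}
    (hαβ : f' ∘ₗ α = β ∘ₗ f) (hβγ : g' ∘ₗ β = γ ∘ₗ g) (z : LocCoh I i P) :
    map I (i + 1) α (connecting I i hf hfg hg z) =
      connecting I i hf' hfg' hg' (map I i γ z) := by
  obtain ⟨t, e, rfl⟩ := exists_of z
  have hnat : (extClass hf hfg hg).comp (Abelian.Ext.mk₀ (ModuleCat.ofHom α)) (add_zero 1) =
      (Abelian.Ext.mk₀ (ModuleCat.ofHom γ)).comp (extClass hf' hfg' hg') (zero_add 1) :=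
    (shortExact_moduleCatMk hf hfg hg).extClass_naturality (shortExact_moduleCatMk hf' hfg' hg')
      (ShortComplex.homMk (ModuleCat.ofHom α) (ModuleCat.ofHom β) (ModuleCat.ofHom γ)
        (ModuleCat.hom_ext hαβ) (ModuleCat.hom_ext hβγ))
  rw [connecting, connecting, yoneda_of, map_of, map_of, yoneda_of,
    Abelian.Ext.comp_assoc_of_third_deg_zero, Abelian.Ext.comp_assoc_of_second_deg_zero, hnat]

end Connecting

section DegreeZero

variable (I M) in
/-- Evaluation at `1`, identifying `H^0_I(M) = colim Hom(A/I^t, M)` with the submodule of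
elements of `M` annihilated by a power of `I`. -/
def evalOne : LocCoh I 0 M →ₗ[A] M :=
  Module.DirectLimit.lift A ℕ _ (transition I 0 M)
    (fun t => LinearMap.applyₗ ((I ^ t).mkQ 1) ∘ₗ
      (Abelian.Ext.linearEquiv₀ (R := A) ≪≫ₗ ModuleCat.homLinearEquiv (S := A)).toLinearMap) (by
    intro s t h e
    obtain ⟨f, rfl⟩ := (Abelian.Ext.linearEquiv₀ (R := A)).symm.surjective e
    have hf : transition I 0 M s t h (Abelian.Ext.linearEquiv₀ (R := A).symm f) =
        (Abelian.Ext.linearEquiv₀ (R := A)).symm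
          (ModuleCat.ofHom (Submodule.factor (Ideal.pow_le_pow_right h)) ≫ f) :=
      Abelian.Ext.mk₀_comp_mk₀ _ _
    simp only [hf, LinearMap.comp_apply, LinearEquiv.coe_coe, LinearEquiv.trans_apply,
      LinearEquiv.apply_symm_apply]
    rfl)

lemma evalOne_of_mk₀ {t : ℕ} (f : ModuleCat.of A (A ⧸ I ^ t) ⟶ ModuleCat.of A M) :
    evalOne I M (of I 0 M t (Abelian.Ext.mk₀ f)) = f.hom ((I ^ t).mkQ 1) := by
  rw [← Abelian.Ext.linearEquiv₀_symm_apply (R := A)]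
  refine (Module.DirectLimit.lift_of _ _ _).trans ?_
  simp only [LinearMap.comp_apply, LinearEquiv.coe_coe, LinearEquiv.trans_apply,
    LinearEquiv.apply_symm_apply]
  rfl

lemma exists_of_mk₀ (z : LocCoh I 0 M) :
    ∃ (t : ℕ) (f : ModuleCat.of A (A ⧸ I ^ t) ⟶ ModuleCat.of A M),
      of I 0 M t (Abelian.Ext.mk₀ f) = z := by
  obtain ⟨t, e, rfl⟩ := exists_of z
  exact ⟨t, Abelian.Ext.linearEquiv₀ (R := A) e, by simp⟩

lemma evalOne_injective : Function.Injective (evalOne I M) := by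
  rw [injective_iff_map_eq_zero]
  intro z hz
  obtain ⟨t, f, rfl⟩ := exists_of_mk₀ z
  rw [evalOne_of_mk₀] at hz
  have hf : f = 0 := by
    ext
    exact hz
  rw [hf, Abelian.Ext.mk₀_zero, map_zero]

lemma exists_evalOne_eq {m : M} {t : ℕ} (h : ∀ r ∈ I ^ t, r • m = 0) :
    ∃ z, evalOne I M z = m :=
  ⟨of I 0 M t (Abelian.Ext.mk₀ (ModuleCat.ofHom
    ((I ^ t).liftQ (LinearMap.toSpanSingleton A M m) h))), by
      rw [evalOne_of_mk₀]
      exact one_smul A m⟩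

lemma evalOne_map (f : M →ₗ[A] N) (z : LocCoh I 0 M) :
    evalOne I N (map I 0 f z) = f (evalOne I M z) := by
  obtain ⟨t, g, rfl⟩ := exists_of_mk₀ z
  rw [map_of, Abelian.Ext.mk₀_comp_mk₀, evalOne_of_mk₀, evalOne_of_mk₀]
  rfl

end DegreeZero

end LocCoh

/-! ### Power torsion modules -/

section PowTorsion

variable {M : Type*} [AddCommGroup M] [Module A M] {N : Type*} [AddCommGroup N] [Module A N]

/-- The `I`-power torsion submodule `⋃ₜ (0 :_M I^t)`. -/
def powTorsion (I : Ideal A) (M : Type*) [AddCommGroup M] [Module A M] : Submodule A M where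
  carrier := {m | ∃ t, ∀ r ∈ I ^ t, r • m = 0}
  zero_mem' := ⟨0, fun r _ => smul_zero r⟩
  add_mem' := by
    rintro a b ⟨s, hs⟩ ⟨t, ht⟩
    refine ⟨s + t, fun r hr => ?_⟩
    rw [smul_add, hs r (Ideal.pow_le_pow_right (by omega) hr),
      ht r (Ideal.pow_le_pow_right (by omega) hr), add_zero]
  smul_mem' := by
    rintro c a ⟨s, hs⟩
    exact ⟨s, fun r hr => by rw [smul_comm, hs r hr, smul_zero]⟩

/-- A module is `I`-power torsion if each of its elements is annihilated by a power of `I`. -/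
def IsPowTorsion (I : Ideal A) (M : Type*) [AddCommGroup M] [Module A M] : Prop :=
  ∀ m : M, m ∈ powTorsion I M

variable {I : Ideal A}

lemma map_mem_powTorsion (f : M →ₗ[A] N) {m : M} (hm : m ∈ powTorsion I M) :
    f m ∈ powTorsion I N := by
  obtain ⟨t, ht⟩ := hm
  exact ⟨t, fun r hr => by rw [← map_smul, ht r hr, map_zero]⟩

lemma isPowTorsion_of_le_powTorsion {T : Submodule A M} (h : T ≤ powTorsion I M) :
    IsPowTorsion I T := by
  rintro ⟨m, hm⟩
  obtain ⟨t, ht⟩ := h hm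
  exact ⟨t, fun r hr => Subtype.ext (ht r hr)⟩

lemma IsPowTorsion.of_surjective (h : IsPowTorsion I M) {f : M →ₗ[A] N}
    (hf : Function.Surjective f) : IsPowTorsion I N := by
  intro n
  obtain ⟨m, rfl⟩ := hf n
  exact map_mem_powTorsion f (h m)

lemma IsPowTorsion.exists_pow_le_annihilator [Module.Finite A M] (h : IsPowTorsion I M) :
    ∃ t, I ^ t ≤ Module.annihilator A M := by
  obtain ⟨S, hS⟩ := Module.finite_def.1 ‹Module.Finite A M›
  choose T hT using h
  refine ⟨S.sup T, fun r hr => ?_⟩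
  rw [← Submodule.annihilator_top, ← hS, Submodule.mem_annihilator_span]
  exact fun m => hT m r (Ideal.pow_le_pow_right (Finset.le_sup m.2) hr)

/-- By the Artin–Rees lemma, `J ∩ I^n ⊆ I^t J` for `n` large. -/
lemma IsPowTorsion.exists_forall_mem_pow_imp_eq_zero [IsNoetherianRing A]
    (h : IsPowTorsion I M) {J : Ideal A} (g : J →ₗ[A] M) :
    ∃ n, ∀ j : J, (j : A) ∈ I ^ n → g j = 0 := by
  obtain ⟨t, ht⟩ : ∃ t, I ^ t ≤ Module.annihilator A (LinearMap.range g) :=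
    (isPowTorsion_of_le_powTorsion fun m _ => h m).exists_pow_le_annihilator
  obtain ⟨k, hk⟩ := Ideal.exists_pow_inf_eq_pow_smul I (J : Submodule A A)
  refine ⟨t + k, fun j hj => ?_⟩
  have hle : I ^ t • (⊤ : Submodule A J) ≤ LinearMap.ker g :=
    Submodule.smul_le.2 fun r hr x _ => by
      have := Module.mem_annihilator.1 (ht hr) ⟨g x, x, rfl⟩
      rw [LinearMap.mem_ker, map_smul]
      exact congrArg Subtype.val this
  have hmem : (j : A) ∈ I ^ (t + k) • (⊤ : Submodule A A) ⊓ J := ⟨by simpa using hj, j.2⟩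
  rw [hk _ (by omega), Nat.add_sub_cancel] at hmem
  have hmap : (j : A) ∈ Submodule.map J.subtype (I ^ t • ⊤) := by
    rw [Submodule.map_smul'', Submodule.map_top, Submodule.range_subtype]
    exact smul_mono_right (I ^ t) (inf_le_right : _ ≤ (J : Submodule A A)) hmem
  obtain ⟨j', hj', hjj'⟩ := hmap
  rw [← Subtype.ext hjj']
  exact hle hj'

lemma exists_linearMap_quotient_extension {E : Type u} [AddCommGroup E] [Module A E]
    [Module.Injective A E] {J K : Ideal A} (g : J →ₗ[A] E) (hg : ∀ j : J, (j : A) ∈ K → g j = 0) :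
    ∃ h : (A ⧸ K) →ₗ[A] E, ∀ j : J, h (K.mkQ j) = g j := by
  have hker : LinearMap.ker (K.mkQ ∘ₗ J.subtype) ≤ LinearMap.ker g := fun j hj =>
    hg j ((Submodule.Quotient.mk_eq_zero K).1 hj)
  obtain ⟨h, hh⟩ := Module.Injective.out
    ((LinearMap.ker (K.mkQ ∘ₗ J.subtype)).liftQ (K.mkQ ∘ₗ J.subtype) le_rfl)
    (LinearMap.ker_eq_bot.1 (Submodule.ker_liftQ_eq_bot _ _ _ le_rfl))
    ((LinearMap.ker (K.mkQ ∘ₗ J.subtype)).liftQ g hker)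
  exact ⟨h, fun j => hh (Submodule.Quotient.mk j)⟩

variable [IsNoetherianRing A]

lemma injective_powTorsion (I : Ideal A) (E : Type u) [AddCommGroup E] [Module A E]
    [Module.Injective A E] : Module.Injective A (powTorsion I E) := by
  refine Module.Baer.injective fun J g => ?_
  obtain ⟨n, hn⟩ := (isPowTorsion_of_le_powTorsion le_rfl).exists_forall_mem_pow_imp_eq_zero g
  obtain ⟨h, hh⟩ := exists_linearMap_quotient_extension ((powTorsion I E).subtype ∘ₗ g)
    (K := I ^ n) fun j hj => by rw [LinearMap.comp_apply, hn j hj, map_zero]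
  have hmem : h ((I ^ n).mkQ 1) ∈ powTorsion I E :=
    map_mem_powTorsion h ⟨n, fun r hr => (Submodule.Quotient.mk_eq_zero _).2 (by simpa using hr)⟩
  refine ⟨LinearMap.toSpanSingleton A _ ⟨_, hmem⟩, fun x hx => Subtype.ext ?_⟩
  rw [LinearMap.toSpanSingleton_apply, Submodule.coe_smul, ← map_smul, ← map_smul, smul_eq_mul,
    mul_one]
  exact hh ⟨x, hx⟩

lemma IsPowTorsion.exists_injective_embedding {T : Type u} [AddCommGroup T] [Module A T]
    (hT : IsPowTorsion I T) :
    ∃ (E : Type u) (_ : AddCommGroup E) (_ : Module A E) (j : T →ₗ[A] E),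
      Function.Injective j ∧ Module.Injective A E ∧ IsPowTorsion I E := by
  let E : ModuleCat.{u} A := Injective.under (ModuleCat.of A T)
  let ι : ModuleCat.of A T ⟶ E := Injective.ι (ModuleCat.of A T)
  have : Module.Injective A E := (Module.injective_iff_injective_object A E).2
    (inferInstanceAs (Injective (Injective.under (ModuleCat.of A T))))
  exact ⟨powTorsion I E, _, _,
    ι.hom.codRestrict (powTorsion I E) fun x => map_mem_powTorsion ι.hom (hT x),
    (LinearMap.injective_codRestrict_iff _).2 ((ModuleCat.mono_iff_injective ι).1 inferInstance),
    injective_powTorsion I E, isPowTorsion_of_le_powTorsion le_rfl⟩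

end PowTorsion

namespace LocCoh

variable {I : Ideal A} {i : ℕ}
  {M : Type u} [AddCommGroup M] [Module A M] {N : Type u} [AddCommGroup N] [Module A N]
  {P : Type u} [AddCommGroup P] [Module A P]

lemma map_zero_surjective (hM : IsPowTorsion I M) {f : M →ₗ[A] N}
    (hf : Function.Surjective f) : Function.Surjective (map I 0 f) := by
  intro y
  obtain ⟨m, hm⟩ := hf (evalOne I N y)
  obtain ⟨t, ht⟩ := hM m
  obtain ⟨z, hz⟩ := exists_evalOne_eq ht
  exact ⟨z, evalOne_injective (by rw [evalOne_map, hz, hm])⟩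

lemma map_subtype_map_rangeRestrict (f : M →ₗ[A] N) (z : LocCoh I i M) :
    map I i (LinearMap.range f).subtype (map I i f.rangeRestrict z) = map I i f z :=
  (map_comp_apply _ _ z).symm

lemma exact_subtype_range {f : M →ₗ[A] N} {g : N →ₗ[A] P}
    (hfg : Function.Exact f g) :
    Function.Exact (LinearMap.range f).subtype g := by
  rw [LinearMap.exact_iff, Submodule.range_subtype, LinearMap.exact_iff.1 hfg]

variable [IsNoetherianRing A]

lemma subsingleton_succ_of_isPowTorsion {T : Type u} [AddCommGroup T] [Module A T]
    (hT : IsPowTorsion I T) : Subsingleton (LocCoh I (i + 1) T) := by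
  induction i generalizing T with
  | zero =>
    obtain ⟨E, _, _, j, hj, _, hE⟩ := hT.exists_injective_embedding
    have := subsingleton_succ_of_injective (I := I) (i := 0) (M := E)
    refine subsingleton_of_forall_eq 0 fun z => ?_
    have hq := Submodule.mkQ_surjective (LinearMap.range j)
    obtain ⟨y, rfl⟩ := (exact_connecting_map hj j.exact_map_mkQ_range hq z).1
      (Subsingleton.elim _ _)
    exact (exact_map_connecting hj j.exact_map_mkQ_range hq y).2 (map_zero_surjective hE hq y)
  | succ i ih =>
    obtain ⟨E, _, _, j, hj, _, hE⟩ := hT.exists_injective_embedding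
    have := subsingleton_succ_of_injective (I := I) (i := i + 1) (M := E)
    have hq := Submodule.mkQ_surjective (LinearMap.range j)
    have := ih (hE.of_surjective hq)
    refine subsingleton_of_forall_eq 0 fun z => ?_
    obtain ⟨y, rfl⟩ := (exact_connecting_map hj j.exact_map_mkQ_range hq z).1
      (Subsingleton.elim _ _)
    rw [Subsingleton.elim y 0, map_zero]

lemma map_succ_bijective {f : M →ₗ[A] N} (hf : Function.Surjective f)
    (hker : LinearMap.ker f ≤ powTorsion I M) : Function.Bijective (map I (i + 1) f) := by
  have hT := isPowTorsion_of_le_powTorsion hker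
  have hexact := LinearMap.exact_subtype_ker_map f
  have hinj := (LinearMap.ker f).injective_subtype
  refine ⟨(injective_iff_map_eq_zero _).2 fun z hz => ?_, fun z => ?_⟩
  · have := subsingleton_succ_of_isPowTorsion (i := i) hT
    obtain ⟨y, rfl⟩ := (exact_map_map hinj hexact hf z).1 hz
    rw [Subsingleton.elim y 0, map_zero]
  · have := subsingleton_succ_of_isPowTorsion (i := i + 1) hT
    exact (exact_map_connecting hinj hexact hf z).1 (Subsingleton.elim _ _)

section TorsionKernel

variable {f : M →ₗ[A] N} {g : N →ₗ[A] P}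

lemma rangeRestrict_map_bijective (hf : LinearMap.ker f ≤ powTorsion I M) :
    Function.Bijective (map I (i + 1) f.rangeRestrict) :=
  map_succ_bijective f.surjective_rangeRestrict (by rwa [LinearMap.ker_rangeRestrict])

variable (I i) in
/-- The connecting homomorphism `H^i_I(P) → H^{i+1}_I(M)` of an exact sequence
`M → N → P → 0` in which the kernel of `M → N` is `I`-power torsion: replacing `M` by its image
in `N` does not change the local cohomology in positive degrees. -/
def torsionConnecting (hf : LinearMap.ker f ≤ powTorsion I M) (hfg : Function.Exact f g)
    (hg : Function.Surjective g) : LocCoh I i P →ₗ[A] LocCoh I (i + 1) M :=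
  (LinearEquiv.ofBijective (map I (i + 1) f.rangeRestrict)
    (rangeRestrict_map_bijective hf)).symm.toLinearMap ∘ₗ
    connecting I i (LinearMap.range f).injective_subtype (exact_subtype_range hfg) hg

lemma map_rangeRestrict_torsionConnecting (hf : LinearMap.ker f ≤ powTorsion I M)
    (hfg : Function.Exact f g) (hg : Function.Surjective g) (z : LocCoh I i P) :
    map I (i + 1) f.rangeRestrict (torsionConnecting I i hf hfg hg z) =
      connecting I i (LinearMap.range f).injective_subtype (exact_subtype_range hfg) hg z :=
  LinearEquiv.apply_symm_apply
    (LinearEquiv.ofBijective (map I (i + 1) f.rangeRestrict) (rangeRestrict_map_bijective hf)) _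

lemma exact_map_torsionConnecting (hf : LinearMap.ker f ≤ powTorsion I M)
    (hfg : Function.Exact f g) (hg : Function.Surjective g) :
    Function.Exact (map I i g) (torsionConnecting I i hf hfg hg) := by
  intro z
  rw [← exact_map_connecting (LinearMap.range f).injective_subtype (exact_subtype_range hfg) hg z,
    torsionConnecting, LinearMap.comp_apply, LinearEquiv.coe_coe, LinearEquiv.map_eq_zero_iff]

lemma exact_torsionConnecting_map (hf : LinearMap.ker f ≤ powTorsion I M)
    (hfg : Function.Exact f g) (hg : Function.Surjective g) :
    Function.Exact (torsionConnecting I i hf hfg hg) (map I (i + 1) f) := by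
  intro w
  rw [← map_subtype_map_rangeRestrict, exact_connecting_map
    (LinearMap.range f).injective_subtype (exact_subtype_range hfg) hg]
  refine exists_congr fun z => ?_
  rw [← map_rangeRestrict_torsionConnecting hf, (rangeRestrict_map_bijective hf).1.eq_iff]

lemma torsionConnecting_map {N' P' : Type u} [AddCommGroup N'] [Module A N'] [AddCommGroup P']
    [Module A P'] {α : N →ₗ[A] N'} {γ : P →ₗ[A] P'} {f' : M →ₗ[A] N'} {g' : N' →ₗ[A] P'}
    (hf : LinearMap.ker f ≤ powTorsion I M) (hfg : Function.Exact f g)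
    (hg : Function.Surjective g) (hf' : LinearMap.ker f' ≤ powTorsion I M)
    (hfg' : Function.Exact f' g') (hg' : Function.Surjective g')
    (hα : α ∘ₗ f = f') (hγ : g' ∘ₗ α = γ ∘ₗ g) (z : LocCoh I i P) :
    torsionConnecting I i hf' hfg' hg' (map I i γ z) = torsionConnecting I i hf hfg hg z := by
  have hαf : ∀ y ∈ LinearMap.range f, α y ∈ LinearMap.range f' := by
    rintro _ ⟨m, rfl⟩
    exact ⟨m, (LinearMap.congr_fun hα m).symm⟩
  let αr : LinearMap.range f →ₗ[A] LinearMap.range f' := α.restrict hαf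
  have hαr : αr ∘ₗ f.rangeRestrict = f'.rangeRestrict :=
    LinearMap.ext fun m => Subtype.ext (LinearMap.congr_fun hα m)
  have hnat := map_connecting (α := αr) (I := I) (i := i)
    (LinearMap.range f).injective_subtype (exact_subtype_range hfg) hg
    (LinearMap.range f').injective_subtype (exact_subtype_range hfg') hg' rfl hγ z
  refine (rangeRestrict_map_bijective hf').1 ?_
  rw [map_rangeRestrict_torsionConnecting, ← hnat,
    ← map_rangeRestrict_torsionConnecting hf, ← map_comp_apply, hαr]

end TorsionKernel

end LocCoh

/-! ### Annihilation of local cohomology -/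

section Annihilation

variable {I J : Ideal A} {k : ℕ}
  {M : Type u} [AddCommGroup M] [Module A M] {N : Type u} [AddCommGroup N] [Module A N]
  {Q : Type u} [AddCommGroup Q] [Module A Q]

/-- `J · H^i_I(M) = 0` for all `i < k`. -/
def AnnihilatesBelow (J I : Ideal A) (M : Type u) [AddCommGroup M] [Module A M] (k : ℕ) : Prop :=
  ∀ i < k, ∀ r ∈ J, ∀ z : LocCoh I i M, r • z = 0

lemma exists_finset_sum_mul_eq_of_mem_sq {x : A} (hx : x ∈ I ^ 2) :
    ∃ (s : Finset I) (a : s → A), (∀ j, a j ∈ I) ∧ ∑ j, a j * j.1.1 = x := by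
  have hspan : Submodule.span A (Set.range (Subtype.val : I → A)) = I :=
    (congrArg _ Subtype.range_coe).trans (Submodule.span_eq I)
  have hx' : x ∈ I • Submodule.span A (Set.range (Subtype.val : I → A)) := by
    rwa [hspan, smul_eq_mul, ← sq]
  obtain ⟨a, ha, hax⟩ := (Submodule.mem_ideal_smul_span_iff_exists_sum I _ _).1 hx'
  exact ⟨a.support, fun j => a j, fun j => ha j, (Finset.sum_coe_sort _ _).trans hax⟩

lemma eq_zero_of_pow_succ_smul_eq_zero {V : Type*} [AddCommGroup V] [Module A V] {x : A}
    (hx : x ∈ I ^ 2) (h : ∀ v : V, x • v = 0 → ∀ r ∈ I, r • v = 0) {n : ℕ} {v : V}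
    (hv : x ^ (n + 1) • v = 0) : x • v = 0 := by
  induction n with
  | zero => rwa [zero_add, pow_one] at hv
  | succ n ih =>
    have hmul : ∀ a ∈ I, ∀ b ∈ I, a • b • x ^ n • v = 0 := fun a ha b hb => by
      refine h _ ?_ a ha
      rw [smul_comm, smul_smul x, ← pow_succ']
      exact h _ (by rwa [smul_smul, ← pow_succ']) b hb
    have hle : I ^ 2 ≤ LinearMap.ker (LinearMap.toSpanSingleton A V (x ^ n • v)) := by
      rw [sq, Ideal.mul_le]
      intro a ha b hb
      rw [LinearMap.mem_ker, LinearMap.toSpanSingleton_apply, mul_smul, hmul a ha b hb]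
    exact ih (by rw [pow_succ', mul_smul]; exact hle hx)

lemma IsPowTorsion.smul_eq_zero_of_mem_sq {V : Type*} [AddCommGroup V] [Module A V]
    (hV : IsPowTorsion I V) {x : A} (hx : x ∈ I ^ 2)
    (h : ∀ v : V, x • v = 0 → ∀ r ∈ I, r • v = 0) {r : A} (hr : r ∈ I) (v : V) : r • v = 0 := by
  obtain ⟨t, ht⟩ := hV v
  have hxI : x ∈ I := Ideal.pow_le_self two_ne_zero hx
  exact h v (eq_zero_of_pow_succ_smul_eq_zero hx h
    (ht _ (Ideal.pow_le_pow_right t.le_succ (Ideal.pow_mem_pow hxI (t + 1))))) r hr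

namespace LocCoh

lemma isPowTorsion (I : Ideal A) (i : ℕ) (M : Type u) [AddCommGroup M] [Module A M] :
    IsPowTorsion I (LocCoh I i M) :=
  exists_pow_smul_eq_zero

variable [IsNoetherianRing A] {i : ℕ} {x r : A} {q : M →ₗ[A] Q}

/-- If `M → M'` factors through maps inducing zero on the relevant cohomology modules, then its
cokernel is annihilated by what annihilates the two adjacent cohomology modules, rather than
by a product of two such elements. -/
lemma smul_eq_zero_of_factorization {M' : Type u} [AddCommGroup M'] [Module A M']
    {β : M →ₗ[A] N} {α : N →ₗ[A] M'} {q : M' →ₗ[A] Q}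
    (hker : LinearMap.ker (α ∘ₗ β) ≤ powTorsion I M) (hexact : Function.Exact (α ∘ₗ β) q)
    (hq : Function.Surjective q) (hβ : ∀ z, map I (i + 1) β z = 0) (hα : ∀ z, map I i α z = 0)
    (hM : ∀ z : LocCoh I (i + 1) M, r • z = 0) (hM' : ∀ z : LocCoh I i M', r • z = 0)
    (z : LocCoh I i Q) : r • z = 0 := by
  have hkerβ : LinearMap.ker β ≤ powTorsion I M := (LinearMap.ker_le_ker_comp β α).trans hker
  have hexactβ := β.exact_map_mkQ_range
  have hβq := Submodule.mkQ_surjective (LinearMap.range β)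
  let γ : (N ⧸ LinearMap.range β) →ₗ[A] Q := (LinearMap.range β).liftQ (q ∘ₗ α) (by
    rintro _ ⟨m, rfl⟩
    exact hexact.apply_apply_eq_zero m)
  have hγ : q ∘ₗ α = γ ∘ₗ (LinearMap.range β).mkQ := rfl
  obtain ⟨z', hz'⟩ := (exact_torsionConnecting_map hkerβ hexactβ hβq
    (torsionConnecting I i hker hexact hq z)).1 (hβ _)
  have hrz' : torsionConnecting I i hkerβ hexactβ hβq (r • z') = 0 := by
    rw [map_smul, hM]
  have hγz' : r • map I i γ z' = 0 := by
    obtain ⟨w, hw⟩ := (exact_map_torsionConnecting hkerβ hexactβ hβq _).1 hrz'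
    rw [← map_smul, ← hw, ← map_comp_apply, ← hγ, map_comp_apply, hα, map_zero]
  have hsub : torsionConnecting I i hker hexact hq (z - map I i γ z') = 0 := by
    rw [map_sub, torsionConnecting_map hkerβ hexactβ hβq hker hexact hq rfl hγ, hz', sub_self]
  obtain ⟨y, hy⟩ := (exact_map_torsionConnecting hker hexact hq _).1 hsub
  rw [← sub_add_cancel z (map I i γ z'), smul_add, hγz', ← hy, ← map_smul, hM', map_zero,
    add_zero]

lemma smul_eq_zero_of_smul_eq_zero (hker : LinearMap.ker (LinearMap.lsmul A M x) ≤ powTorsion I M)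
    (hexact : Function.Exact (LinearMap.lsmul A M x) q) (hq : Function.Surjective q)
    (h : ∀ z : LocCoh I i Q, r • z = 0) {w : LocCoh I (i + 1) M} (hw : x • w = 0) :
    r • w = 0 := by
  rw [← map_lsmul_apply, exact_torsionConnecting_map hker hexact hq] at hw
  obtain ⟨z, rfl⟩ := hw
  rw [← map_smul, h, map_zero]

end LocCoh

namespace AnnihilatesBelow

open LocCoh

lemma smul_eq_zero_of_pow_smul_eq_zero (h : AnnihilatesBelow J I M (k + 1)) {m : M}
    (hm : m ∈ powTorsion I M) {r : A} (hr : r ∈ J) : r • m = 0 := by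
  obtain ⟨t, ht⟩ := hm
  obtain ⟨z, rfl⟩ := exists_evalOne_eq ht
  rw [← map_smul, h 0 k.succ_pos r hr, map_zero]

variable [IsNoetherianRing A] {x : A} {q : M →ₗ[A] Q}

lemma quotient (h : AnnihilatesBelow J I M (k + 1))
    (hker : LinearMap.ker (LinearMap.lsmul A M x) ≤ powTorsion I M)
    (hexact : Function.Exact (LinearMap.lsmul A M x) q) (hq : Function.Surjective q) :
    AnnihilatesBelow (J * J) I Q k := by
  intro i hi r hr z
  refine Submodule.mul_induction_on hr (fun a ha b hb => ?_) fun a b ha hb => by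
    rw [add_smul, ha, hb, add_zero]
  have hb' : torsionConnecting I i hker hexact hq (b • z) = 0 := by
    rw [map_smul, h (i + 1) (by omega) b hb]
  obtain ⟨y, hy⟩ := (exact_map_torsionConnecting hker hexact hq _).1 hb'
  rw [mul_smul, ← hy, ← map_smul, h i (by omega) a ha, map_zero]

lemma quotient_of_mem_sq (h : AnnihilatesBelow I I M (k + 1)) (hx : x ∈ I ^ 2)
    (hker : LinearMap.ker (LinearMap.lsmul A M x) ≤ powTorsion I M)
    (hexact : Function.Exact (LinearMap.lsmul A M x) q) (hq : Function.Surjective q) :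
    AnnihilatesBelow I I Q k := by
  classical
  intro i hi r hr
  obtain ⟨s, a, ha, rfl⟩ := exists_finset_sum_mul_eq_of_mem_sq hx
  let β : M →ₗ[A] s → M := ∑ j : s, j.1.1 • LinearMap.single A (fun _ => M) j
  let α : (s → M) →ₗ[A] M := ∑ j : s, a j • LinearMap.proj j
  have hfact : LinearMap.lsmul A M (∑ j, a j * j.1.1) = α ∘ₗ β := by
    ext m
    simp [α, β, mul_smul, Finset.sum_apply, Pi.single_apply]
  rw [hfact] at hker hexact
  refine smul_eq_zero_of_factorization hker hexact hq (fun z => ?_) (fun z => ?_)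
    (h (i + 1) (by omega) r hr) (h i (by omega) r hr)
  · rw [map_sum_apply]
    refine Finset.sum_eq_zero fun j _ => ?_
    rw [map_smul_apply, ← map_smul, h (i + 1) (by omega) _ j.1.2, map_zero]
  · rw [map_sum_apply]
    refine Finset.sum_eq_zero fun j _ => ?_
    rw [map_smul_apply, h i (by omega) _ (ha j)]

lemma of_quotient (h : AnnihilatesBelow I I Q k) (hx : x ∈ I ^ 2)
    (hker : ∀ m : M, x • m = 0 → ∀ r ∈ I, r • m = 0)
    (hexact : Function.Exact (LinearMap.lsmul A M x) q) (hq : Function.Surjective q) :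
    AnnihilatesBelow I I M (k + 1) := by
  have hker' : LinearMap.ker (LinearMap.lsmul A M x) ≤ powTorsion I M := fun m hm =>
    ⟨1, by simpa using hker m hm⟩
  rintro (_ | i) hi r hr z
  · refine (isPowTorsion I 0 M).smul_eq_zero_of_mem_sq hx (fun v hv s hs => ?_) hr z
    refine evalOne_injective ?_
    rw [map_smul, map_zero]
    exact hker _ (by rw [← map_smul, hv, map_zero]) s hs
  · exact (isPowTorsion I (i + 1) M).smul_eq_zero_of_mem_sq hx (fun w hw s hs =>
      smul_eq_zero_of_smul_eq_zero hker' hexact hq (h i (by omega) s hs) hw) hr z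

end AnnihilatesBelow

end Annihilation

/-! ### Filter regularity of parameters -/

section FilterRegular

/-- Prime avoidance for the coset `x + J`. -/
lemma exists_mem_forall_add_notMem (x : A) (J : Ideal A) (S : Finset (Ideal A))
    (hS : ∀ p ∈ S, p.IsPrime) (hJ : ∀ p ∈ S, x ∈ p → ¬ J ≤ p) :
    ∃ c ∈ J, ∀ p ∈ S, x + c ∉ p := by
  classical
  induction S using Finset.strongInduction with
  | H S ih =>
    obtain rfl | hne := S.eq_empty_or_nonempty
    · exact ⟨0, J.zero_mem, by simp⟩
    obtain ⟨p₀, hp₀, hmin⟩ := S.exists_minimal hne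
    obtain ⟨c, hcJ, hc⟩ := ih (S.erase p₀) (Finset.erase_ssubset hp₀)
      (fun p h => hS p (Finset.mem_of_mem_erase h)) fun p h => hJ p (Finset.mem_of_mem_erase h)
    by_cases hcp₀ : x + c ∉ p₀
    · refine ⟨c, hcJ, fun p hp => ?_⟩
      obtain rfl | hne := eq_or_ne p p₀
      exacts [hcp₀, hc p (Finset.mem_erase.2 ⟨hne, hp⟩)]
    rw [not_not] at hcp₀
    have hJp₀ : ¬ J ≤ p₀ := fun h =>
      hJ p₀ hp₀ ((Ideal.add_mem_iff_left _ (h hcJ)).1 hcp₀) h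
    have hinf : ¬ J ⊓ (S.erase p₀).inf id ≤ p₀ := by
      rw [(hS p₀ hp₀).inf_le, (hS p₀ hp₀).inf_le']
      rintro (h | ⟨p, hp, hle⟩)
      · exact hJp₀ h
      · exact (Finset.mem_erase.1 hp).1 (hle.antisymm (hmin (Finset.mem_of_mem_erase hp) hle))
    obtain ⟨d, ⟨hdJ, hdS⟩, hd⟩ := SetLike.not_le_iff_exists.1 hinf
    refine ⟨c + d, J.add_mem hcJ hdJ, fun p hp hmem => ?_⟩
    rw [← add_assoc] at hmem
    obtain rfl | hne := eq_or_ne p p₀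
    · exact hd ((Ideal.add_mem_iff_right _ hcp₀).1 hmem)
    · have hpS : p ∈ S.erase p₀ := Finset.mem_erase.2 ⟨hne, hp⟩
      have hdp : d ∈ p := (Finset.inf_le hpS : (S.erase p₀).inf id ≤ p) hdS
      exact hc p hpS ((Ideal.add_mem_iff_left _ hdp).1 hmem)

variable [IsNoetherianRing A] {I J : Ideal A} {x y : A}
  {M : Type*} [AddCommGroup M] [Module A M]

lemma exists_mem_forall_associatedPrimes_add_notMem [Module.Finite A M]
    (hI : I ≤ (Ideal.span {x} ⊔ J ⊔ Module.annihilator A M).radical) :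
    ∃ c ∈ J, ∀ p ∈ associatedPrimes A M, ¬ I ≤ p → x + c ∉ p := by
  classical
  have hfin := associatedPrimes.finite A M
  obtain ⟨c, hcJ, hc⟩ := exists_mem_forall_add_notMem x J {p ∈ hfin.toFinset | ¬ I ≤ p}
    (fun p hp => (hfin.mem_toFinset.1 (Finset.mem_filter.1 hp).1).isPrime) (by
      intro p hp hxp hJp
      obtain ⟨hpM, hIp⟩ := Finset.mem_filter.1 hp
      have hass : IsAssociatedPrime p M := hfin.mem_toFinset.1 hpM
      have hann : Module.annihilator A M ≤ p :=
        Submodule.annihilator_top.ge.trans hass.annihilator_le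
      exact hIp (hI.trans (hass.isPrime.radical_le_iff.2
        (sup_le (sup_le ((Ideal.span_singleton_le_iff_mem p).2 hxp) hJp) hann))))
  exact ⟨c, hcJ, fun p hp hIp => hc p (Finset.mem_filter.2 ⟨hfin.mem_toFinset.2 hp, hIp⟩)⟩

lemma ker_lsmul_le_powTorsion_of_forall_associatedPrimes
    (h : ∀ p ∈ associatedPrimes A M, ¬ I ≤ p → y ∉ p) :
    LinearMap.ker (LinearMap.lsmul A M y) ≤ powTorsion I M := by
  intro m hm
  let N := Submodule.span A {m}
  have hyN : y ∈ Module.annihilator A N :=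
    (Submodule.mem_annihilator_span_singleton m y).2 hm
  have hI : I ≤ (Module.annihilator A N).radical := by
    rw [← Ideal.sInf_minimalPrimes]
    refine le_sInf fun p hp => ?_
    have hpM : p ∈ associatedPrimes A M := associatedPrimes.subset_of_injective
      N.injective_subtype
      (Module.associatedPrimes.minimalPrimes_annihilator_subset_associatedPrimes A N hp)
    exact not_imp_not.1 (h p hpM) (hp.1.2 hyN)
  obtain ⟨t, ht⟩ := Ideal.exists_pow_le_of_le_radical_of_fg hI (IsNoetherian.noetherian I)
  exact ⟨t, fun r hr => (Submodule.mem_annihilator_span_singleton m r).1 (ht hr)⟩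

lemma eq_zero_of_forall_mem_range_lsmul_pow [Module.Finite A M]
    (hy : y ∈ (⊥ : Ideal A).jacobson) {m : M}
    (h : ∀ n : ℕ, m ∈ LinearMap.range (LinearMap.lsmul A M (y ^ n))) : m = 0 := by
  have hinf := Ideal.iInf_pow_smul_eq_bot_of_le_jacobson (M := M) (Ideal.span {y})
    ((Ideal.span_singleton_le_iff_mem _).2 hy)
  rw [← Submodule.mem_bot A, ← hinf, Submodule.mem_iInf]
  intro n
  obtain ⟨m', rfl⟩ := h n
  exact Submodule.smul_mem_smul (Ideal.pow_mem_pow (Ideal.mem_span_singleton_self y) n) trivial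

end FilterRegular

section Quotient

variable {M : Type*} [AddCommGroup M] [Module A M]

lemma mem_annihilator_quotient_range_lsmul (y : A) :
    y ∈ Module.annihilator A (M ⧸ LinearMap.range (LinearMap.lsmul A M y)) :=
  Module.mem_annihilator.2 fun z => by
    obtain ⟨m, rfl⟩ := Submodule.mkQ_surjective _ z
    rw [← map_smul]
    exact (Submodule.Quotient.mk_eq_zero _).2 ⟨m, rfl⟩

lemma radical_le_radical_sup_annihilator_quotient {x c y : A} {J : Ideal A} {n : ℕ} (hc : c ∈ J)
    (hy : y = (x + c) ^ n) :
    (Ideal.span {x} ⊔ J ⊔ Module.annihilator A M).radical ≤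
      (J ⊔ Module.annihilator A (M ⧸ LinearMap.range (LinearMap.lsmul A M y))).radical := by
  set B := Module.annihilator A (M ⧸ LinearMap.range (LinearMap.lsmul A M y))
  have hJ : J ≤ (J ⊔ B).radical := le_sup_left.trans Ideal.le_radical
  have hxc : x + c ∈ (J ⊔ B).radical :=
    ⟨n, (le_sup_right : B ≤ J ⊔ B) (hy ▸ mem_annihilator_quotient_range_lsmul y)⟩
  have hx : x ∈ (J ⊔ B).radical := (Ideal.add_mem_iff_left _ (hJ hc)).1 hxc
  have hM : Module.annihilator A M ≤ B :=
    LinearMap.annihilator_le_of_surjective _ (Submodule.mkQ_surjective _)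
  exact Ideal.radical_le_radical_iff.2 (sup_le
    (sup_le ((Ideal.span_singleton_le_iff_mem _).2 hx) hJ)
    (hM.trans (le_sup_right.trans Ideal.le_radical)))

end Quotient

lemma span_range_fin_succ {n : ℕ} (x : Fin (n + 1) → A) :
    Ideal.span (Set.range x) = Ideal.span {x 0} ⊔ Ideal.span (Set.range (Fin.tail x)) := by
  rw [← Ideal.span_union, ← Set.insert_eq, ← Fin.range_cons, Fin.cons_self_tail]

/-- Parameters are filter regular as soon as the lower local cohomology has bounded torsion. One
adds to a parameter `x₁` an element of the ideal of the remaining ones, so that a power `y` of the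
sum is filter regular on `M`; then `x₀` is filter regular on `M/yM` by induction, with exponents
independent of `y`, and Krull's intersection theorem lifts this to `M`. -/
lemma AnnihilatesBelow.ker_lsmul_le_powTorsion [IsNoetherianRing A] {I : Ideal A} {k t : ℕ}
    {M : Type u} [AddCommGroup M] [Module A M] [Module.Finite A M]
    (h : AnnihilatesBelow (I ^ t) I M (k + 1)) {x₀ : A} {x : Fin k → A}
    (hjac : Ideal.span {x₀} ⊔ Ideal.span (Set.range x) ≤ (⊥ : Ideal A).jacobson)
    (hI : I ≤ (Ideal.span {x₀} ⊔ Ideal.span (Set.range x) ⊔ Module.annihilator A M).radical) :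
    LinearMap.ker (LinearMap.lsmul A M x₀) ≤ powTorsion I M := by
  induction k generalizing t M with
  | zero =>
    rw [Set.range_eq_empty, Ideal.span_empty, sup_bot_eq] at hI
    refine ker_lsmul_le_powTorsion_of_forall_associatedPrimes fun p hp hIp hx₀ => hIp ?_
    have hann : Module.annihilator A M ≤ p :=
      Submodule.annihilator_top.ge.trans hp.annihilator_le
    exact hI.trans (hp.isPrime.radical_le_iff.2
      (sup_le ((Ideal.span_singleton_le_iff_mem p).2 hx₀) hann))
  | succ k ih =>
    set J := Ideal.span {x₀} ⊔ Ideal.span (Set.range (Fin.tail x)) with hJ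
    have hxJ : Ideal.span {x₀} ⊔ Ideal.span (Set.range x) = Ideal.span {x 0} ⊔ J := by
      rw [span_range_fin_succ, sup_left_comm]
    rw [hxJ] at hI hjac
    obtain ⟨c, hcJ, hc⟩ := exists_mem_forall_associatedPrimes_add_notMem hI
    have hyjac : x 0 + c ∈ (⊥ : Ideal A).jacobson := hjac (add_mem
      (Ideal.mem_sup_left (Ideal.mem_span_singleton_self _)) (Ideal.mem_sup_right hcJ))
    refine fun m hm => ⟨t + t, fun r hr => eq_zero_of_forall_mem_range_lsmul_pow hyjac fun n => ?_⟩
    set y := (x 0 + c) ^ n with hy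
    have hker : LinearMap.ker (LinearMap.lsmul A M y) ≤ powTorsion I M :=
      ker_lsmul_le_powTorsion_of_forall_associatedPrimes fun p hp hIp hyp =>
        hc p hp hIp (hp.isPrime.mem_of_pow_mem n hyp)
    have hQ := h.quotient hker (LinearMap.exact_map_mkQ_range _) (Submodule.mkQ_surjective _)
    rw [← pow_add] at hQ
    have hmQ := ih hQ (le_sup_right.trans hjac)
      (hI.trans (radical_le_radical_sup_annihilator_quotient hcJ hy))
      (show x₀ • Submodule.mkQ _ m = 0 by rw [← map_smul]; exact (congrArg _ hm).trans (map_zero _))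
    have hrQ := hQ.smul_eq_zero_of_pow_smul_eq_zero hmQ hr
    rw [← map_smul] at hrQ
    exact (Submodule.Quotient.mk_eq_zero _).1 hrQ

/-! ### Weak sequences -/

section WeakSequence

variable {I : Ideal R} {M : Type} [AddCommGroup M] [Module R M] {c : ℕ}

lemma pSpan_zero (x : Fin (c + 1) → R) : pSpan M x 0 = ⊥ := by
  simp [pSpan]

lemma image_setOf_lt_succ {α : Type*} (x : Fin (c + 1) → α) (i : Fin c) :
    x '' {j | j < i.succ} = {x 0} ∪ Fin.tail x '' {j | j < i} := by
  ext r
  simp [Fin.exists_fin_succ, Fin.tail, eq_comm]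

lemma mem_pSpan_succ (x : Fin (c + 1) → R) (i : Fin c) (m : M) :
    m ∈ pSpan M x i.succ ↔
      (LinearMap.range (LinearMap.lsmul R M (x 0))).mkQ m ∈
        pSpan (M ⧸ LinearMap.range (LinearMap.lsmul R M (x 0))) (Fin.tail x) i := by
  have hmap : pSpan (M ⧸ LinearMap.range (LinearMap.lsmul R M (x 0))) (Fin.tail x) i =
      (Ideal.span (Fin.tail x '' {j | j < i}) • (⊤ : Submodule R M)).map
        (LinearMap.range (LinearMap.lsmul R M (x 0))).mkQ := by
    rw [Submodule.map_smul'', Submodule.map_top, Submodule.range_mkQ, pSpan]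
  have hrange : LinearMap.range (LinearMap.lsmul R M (x 0)) =
      Ideal.span {x 0} • (⊤ : Submodule R M) := by
    rw [Submodule.ideal_span_singleton_smul, LinearMap.range_eq_map]
    rfl
  rw [hmap, ← Submodule.mem_comap, Submodule.comap_map_eq, Submodule.ker_mkQ, hrange,
    ← Submodule.sup_smul, pSpan, image_setOf_lt_succ, Ideal.span_union, sup_comm]

lemma isWeakSeq_succ_iff (x : Fin (c + 1) → R) :
    IsWeakSeq I M x ↔ (∀ m : M, x 0 • m = 0 → ∀ a ∈ I, a • m = 0) ∧
      IsWeakSeq I (M ⧸ LinearMap.range (LinearMap.lsmul R M (x 0))) (Fin.tail x) := by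
  refine Fin.forall_fin_succ.trans (and_congr ?_ (forall_congr' fun i => ?_))
  · simp only [pSpan_zero, Submodule.mem_bot]
  · simp only [mem_pSpan_succ, map_smul, (Submodule.mkQ_surjective _).forall]
    rfl

variable [IsNoetherianRing R]

lemma IsWeakSeq.annihilatesBelow {x : Fin c → R} (hw : IsWeakSeq I M x)
    (hx : ∀ j, x j ∈ I ^ 2) : AnnihilatesBelow I I M c := by
  induction c generalizing M with
  | zero => exact fun i hi => absurd hi i.not_lt_zero
  | succ c ih =>
    obtain ⟨hx₀, hw⟩ := (isWeakSeq_succ_iff x).1 hw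
    exact (ih hw fun j => hx j.succ).of_quotient (hx 0) hx₀
      (LinearMap.exact_map_mkQ_range _) (Submodule.mkQ_surjective _)

lemma AnnihilatesBelow.isWeakSeq [Module.Finite R M] (h : AnnihilatesBelow I I M c)
    {x : Fin c → R} (hx : ∀ j, x j ∈ I ^ 2)
    (hjac : Ideal.span (Set.range x) ≤ (⊥ : Ideal R).jacobson)
    (hI : I ≤ (Ideal.span (Set.range x) ⊔ Module.annihilator R M).radical) :
    IsWeakSeq I M x := by
  induction c generalizing M with
  | zero => exact fun i => i.elim0
  | succ c ih =>
    rw [span_range_fin_succ] at hjac hI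
    have hker : LinearMap.ker (LinearMap.lsmul R M (x 0)) ≤ powTorsion I M :=
      AnnihilatesBelow.ker_lsmul_le_powTorsion (by rwa [pow_one]) hjac hI
    refine (isWeakSeq_succ_iff x).2 ⟨fun m hm a ha =>
      h.smul_eq_zero_of_pow_smul_eq_zero (hker hm) ha, ih ?_ (fun j => hx j.succ)
        (le_sup_right.trans hjac) (hI.trans ?_)⟩
    · exact h.quotient_of_mem_sq (hx 0) hker (LinearMap.exact_map_mkQ_range _)
        (Submodule.mkQ_surjective _)
    · exact radical_le_radical_sup_annihilator_quotient (zero_mem _) (n := 1) (by simp)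

end WeakSequence

/-- Replace each generator by the square of the `I`-component of one of its powers. -/
lemma exists_isRsop_forall_mem_sq {I : Ideal R} {M : Type} [AddCommGroup M] [Module R M] {c : ℕ}
    {x : Fin c → R} (hx : (Ideal.span (Set.range x) + Module.annihilator R M).radical =
      (I + Module.annihilator R M).radical) :
    ∃ y : Fin c → R, IsRsop I M y ∧ ∀ j, y j ∈ I ^ 2 := by
  set B := Module.annihilator R M
  have hpow (j : Fin c) : ∃ n, ∃ a ∈ I, ∃ b ∈ B, a + b = x j ^ n := by
    obtain ⟨n, hn⟩ : x j ∈ (I + B).radical :=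
      hx ▸ Ideal.le_radical (Ideal.mem_sup_left (Ideal.subset_span ⟨j, rfl⟩))
    exact ⟨n, Submodule.mem_sup.1 hn⟩
  choose n a ha b hb hab using hpow
  have hmem (j : Fin c) : a j ^ 2 ∈ I := Ideal.pow_mem_of_mem I (ha j) 2 two_pos
  refine ⟨fun j => a j ^ 2, ⟨hmem, le_antisymm ?_ ?_⟩, fun j => Ideal.pow_mem_pow (ha j) 2⟩
  · refine Ideal.radical_mono (sup_le_sup_right (Ideal.span_le.2 ?_) B)
    rintro _ ⟨j, rfl⟩
    exact hmem j
  · rw [← hx, Ideal.radical_le_radical_iff]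
    refine sup_le (Ideal.span_le.2 ?_) (le_sup_right.trans Ideal.le_radical)
    rintro _ ⟨j, rfl⟩
    rw [SetLike.mem_coe, ← Ideal.radical_idem]
    refine ⟨n j, hab j ▸ add_mem ?_ (Ideal.le_radical (Ideal.mem_sup_right (hb j)))⟩
    exact ⟨2, Ideal.mem_sup_left (Ideal.subset_span ⟨j, rfl⟩)⟩

/-! ### Comparison of the two constructions of `Ext` -/

section ExtComparison

universe v w

variable {S : Type*} [Ring S] {C : Type*} [Category.{v} C] [Abelian C] [Linear S C]

section ExtMk

variable [HasExt.{w} C] {X Y : C} (P : ProjectiveResolution X) {n : ℕ}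

lemma smul_extMk (r : S) (f : P.complex.X n ⟶ Y) (hf : P.complex.d (n + 1) n ≫ f = 0) :
    r • P.extMk f (n + 1) rfl hf = P.extMk (r • f) (n + 1) rfl (by simp [hf]) := by
  have hcomp := P.extMk_comp_mk₀ f (n + 1) rfl hf (r • 𝟙 Y)
  rw [Abelian.Ext.mk₀_smul] at hcomp
  simpa using hcomp

lemma extMk_eq_zero_iff (f : P.complex.X n ⟶ Y) (hf : P.complex.d (n + 1) n ≫ f = 0) :
    P.extMk f (n + 1) rfl hf = 0 ↔
      ∃ g, P.complex.d n ((ComplexShape.down ℕ).next n) ≫ g = f := by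
  rcases n with _ | n
  · have : P.complex.d 0 ((ComplexShape.down ℕ).next 0) = 0 := P.complex.shape _ _ (by simp)
    simp only [this, Limits.zero_comp, ← P.extEquivCohomologyClass.apply_eq_iff_eq,
      ProjectiveResolution.extEquivCohomologyClass_extMk,
      ProjectiveResolution.extEquivCohomologyClass_zero,
      CochainComplex.HomComplex.CohomologyClass.mk_eq_zero_iff]
    rw [CochainComplex.HomComplex.Cocycle.toSingleMk_mem_coboundaries_iff _ _ _ _ _ 1 (by simp)]
    have hz : Limits.IsZero (P.cochainComplex.X 1) := P.cochainComplex.isZero_of_isStrictlyLE 0 1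
    constructor
    · rintro ⟨g, hg⟩
      rw [hz.eq_of_src g 0, Limits.comp_zero] at hg
      refine ⟨0, ?_⟩
      rw [← cancel_epi (P.cochainComplexXIso (-(0:ℕ)) 0 rfl).hom, ← hg]; simp
    · rintro ⟨_, hg⟩
      exact ⟨0, by rw [← hg]; simp⟩
  · rw [P.extMk_eq_zero_iff f (n + 2) rfl hf n rfl, (ComplexShape.down ℕ).next_eq' rfl]

end ExtMk

variable (S) in
/-- The complex `Hom(P, Y)`, with values in the opposite of the category of modules as in the
definition of `Ext` as a left derived functor. -/
abbrev homComplex (P : ChainComplex C ℕ) (Y : C) : ChainComplex (ModuleCat.{v} S)ᵒᵖ ℕ :=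
  (((linearYoneda S C).obj Y).rightOp.mapHomologicalComplex (ComplexShape.down ℕ)).obj P

variable (S) in
/-- The module of cocycles of degree `n` of `Hom(P, Y)`. -/
abbrev homCocycles (P : ChainComplex C ℕ) (Y : C) (n : ℕ) : ModuleCat.{v} S :=
  ((homComplex S P Y).opcycles n).unop

namespace homCocycles

variable {P : ChainComplex C ℕ} {Y : C} {n : ℕ}

/-- The morphism `P_n ⟶ Y` underlying a cocycle. -/
def toHom : homCocycles S P Y n →ₗ[S] (P.X n ⟶ Y) :=
  ((homComplex S P Y).pOpcycles n).unop.hom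

/-- The class of a cocycle in the cohomology of `Hom(P, Y)`. -/
def toCohomology : homCocycles S P Y n →ₗ[S] ((homComplex S P Y).homology n).unop :=
  ((homComplex S P Y).homologyι n).unop.hom

lemma toHom_injective : Function.Injective (toHom : homCocycles S P Y n →ₗ[S] _) := by
  have : Mono ((homComplex S P Y).pOpcycles n).unop := inferInstance
  exact (ModuleCat.mono_iff_injective _).1 this

lemma toCohomology_surjective :
    Function.Surjective (toCohomology : homCocycles S P Y n →ₗ[S] _) := by
  have : Epi ((homComplex S P Y).homologyι n).unop := inferInstance
  exact (ModuleCat.epi_iff_surjective _).1 this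

lemma d_comp_toHom (z : homCocycles S P Y n) : P.d (n + 1) n ≫ toHom z = 0 :=
  congrArg (fun φ => φ.unop.hom z) ((homComplex S P Y).d_pOpcycles (n + 1) n)

lemma exists_toHom_eq {f : P.X n ⟶ Y} (hf : P.d (n + 1) n ≫ f = 0) :
    ∃ z : homCocycles S P Y n, toHom z = f := by
  have hexact : (ShortComplex.mk _ _ ((homComplex S P Y).d_pOpcycles (n + 1) n)).Exact :=
    ShortComplex.exact_of_g_is_cokernel _
      ((homComplex S P Y).opcyclesIsCokernel (n + 1) n (by simp))
  exact (ShortComplex.moduleCat_exact_iff _).1 hexact.unop f hf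

/-- In degree `0`, the differential out of `P_0` is zero by convention. -/
lemma toCohomology_eq_zero_iff {z : homCocycles S P Y n} :
    toCohomology z = 0 ↔ ∃ g, P.d n ((ComplexShape.down ℕ).next n) ≫ g = toHom z := by
  set j := (ComplexShape.down ℕ).next n with hj
  let δ : (P.X j ⟶ Y) →ₗ[S] homCocycles S P Y n := ((homComplex S P Y).fromOpcycles n j).unop.hom
  have hδ (g : P.X j ⟶ Y) : toHom (δ g) = P.d n j ≫ g :=
    congrArg (fun φ => φ.unop.hom g) ((homComplex S P Y).p_fromOpcycles n j)
  have hexact : (ShortComplex.mk _ _ ((homComplex S P Y).homologyι_comp_fromOpcycles n j)).Exact :=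
    ShortComplex.exact_of_f_is_kernel _ ((homComplex S P Y).homologyIsKernel n j hj.symm)
  constructor
  · intro hz
    obtain ⟨g, hg⟩ := (ShortComplex.moduleCat_exact_iff _).1 hexact.unop z hz
    exact ⟨g, (hδ g).symm.trans (congrArg toHom hg)⟩
  · rintro ⟨g, hg⟩
    rw [← hδ] at hg
    rw [← toHom_injective hg]
    exact congrArg (fun φ => φ.unop.hom g) ((homComplex S P Y).homologyι_comp_fromOpcycles n j)

section Map

variable {Q : ChainComplex C ℕ}

variable (S Y n) in
/-- The map on cocycles given by composition with a morphism of complexes. -/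
def map (φ : P ⟶ Q) : homCocycles S Q Y n →ₗ[S] homCocycles S P Y n :=
  (HomologicalComplex.opcyclesMap
    ((((linearYoneda S C).obj Y).rightOp.mapHomologicalComplex _).map φ) n).unop.hom

lemma toHom_map (φ : P ⟶ Q) (z : homCocycles S Q Y n) :
    toHom (map S Y n φ z) = φ.f n ≫ toHom z :=
  congrArg (fun ψ => ψ.unop.hom z) (HomologicalComplex.p_opcyclesMap
    ((((linearYoneda S C).obj Y).rightOp.mapHomologicalComplex _).map φ) n)

end Map

section DerivedCategory

variable [HasExt.{w} C] {X : C} (P : ProjectiveResolution X)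

variable (S Y n) in
/-- The class of a cocycle in the `Ext` group of the derived category. -/
def toAbelianExt : homCocycles S P.complex Y n →ₗ[S] Abelian.Ext.{w} X Y n where
  toFun z := P.extMk (toHom z) (n + 1) rfl (d_comp_toHom z)
  map_add' z z' := by simp only [map_add, P.add_extMk]
  map_smul' r z := by simp only [map_smul, smul_extMk, RingHom.id_apply]

lemma toAbelianExt_surjective : Function.Surjective (toAbelianExt S Y n P) := by
  intro e
  obtain ⟨f, hf, rfl⟩ := P.extMk_surjective e (n + 1) rfl
  obtain ⟨z, rfl⟩ := exists_toHom_eq (S := S) hf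
  exact ⟨z, rfl⟩

lemma ker_toAbelianExt :
    LinearMap.ker (toAbelianExt S Y n P) = LinearMap.ker toCohomology := by
  ext z
  exact (extMk_eq_zero_iff P _ (d_comp_toHom z)).trans toCohomology_eq_zero_iff.symm

lemma mk₀_comp_toAbelianExt {X' : C} {P} {P' : ProjectiveResolution X'} {g : X' ⟶ X}
    (φ : P'.Hom P g) (z : homCocycles S P.complex Y n) :
    (Abelian.Ext.mk₀ g).comp (toAbelianExt S Y n P z) (zero_add n) =
      toAbelianExt S Y n P' (map S Y n φ.hom z) := by
  simp only [toAbelianExt, LinearMap.coe_mk, AddHom.coe_mk, toHom_map]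
  exact ProjectiveResolution.mk₀_comp_extMk _ _ _ _ φ

end DerivedCategory

section DerivedFunctor

variable [EnoughProjectives C] {X : C} (P : ProjectiveResolution X)

variable (S Y n) in
/-- The class of a cocycle in `Ext` defined as a left derived functor. -/
def toExt : homCocycles S P.complex Y n →ₗ[S] ((Ext S C n).obj (.op X)).obj Y :=
  (P.isoLeftDerivedObj (((linearYoneda S C).obj Y).rightOp) n).unop.hom.hom ∘ₗ toCohomology

lemma bijective_isoLeftDerivedObj_unop : Function.Bijective
    (P.isoLeftDerivedObj (((linearYoneda S C).obj Y).rightOp) n).unop.hom.hom :=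
  (ConcreteCategory.isIso_iff_bijective _).1 inferInstance

lemma toExt_surjective : Function.Surjective (toExt S Y n P) :=
  (bijective_isoLeftDerivedObj_unop P).2.comp toCohomology_surjective

lemma ker_toExt : LinearMap.ker (toExt S Y n P) = LinearMap.ker toCohomology :=
  LinearMap.ker_comp_of_ker_eq_bot _ (LinearMap.ker_eq_bot.2 (bijective_isoLeftDerivedObj_unop P).1)

lemma map_toExt {X' : C} {P} {P' : ProjectiveResolution X'} {g : X' ⟶ X}
    (φ : P'.Hom P g) (z : homCocycles S P.complex Y n) :
    (((Ext S C n).map g.op).app Y).hom (toExt S Y n P z) =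
      toExt S Y n P' (map S Y n φ.hom z) := by
  let F := ((linearYoneda S C).obj Y).rightOp
  let ψ := (F.mapHomologicalComplex (ComplexShape.down ℕ)).map φ.hom
  have hιψ := congrArg (fun θ => θ.unop.hom z) (HomologicalComplex.homologyι_naturality ψ n)
  have hiso := congrArg (fun θ => θ.unop.hom (toCohomology z))
    (ProjectiveResolution.isoLeftDerivedObj_hom_naturality
      g P' P φ.hom (by simpa using φ.hom_f_zero_comp_π_f_zero) F n)
  exact hiso.trans (congrArg (P'.isoLeftDerivedObj F n).unop.hom.hom hιψ)

end DerivedFunctor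

end homCocycles

section ExtEquiv

variable [EnoughProjectives C] [HasExt.{w} C]

open homCocycles

variable (S) in
/-- The `Ext` groups of the derived category are the left derived functors of `Hom(-, Y)`, both
being computed by a projective resolution of `X`. -/
def extLinearEquiv (X Y : C) (n : ℕ) :
    Abelian.Ext.{w} X Y n ≃ₗ[S] ((Ext S C n).obj (.op X)).obj Y :=
  let P := projectiveResolution X
  ((toAbelianExt S Y n P).quotKerEquivOfSurjective (toAbelianExt_surjective P)).symm ≪≫ₗ
    Submodule.quotEquivOfEq _ _ ((ker_toAbelianExt P).trans (ker_toExt P).symm) ≪≫ₗ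
    (toExt S Y n P).quotKerEquivOfSurjective (toExt_surjective P)

lemma extLinearEquiv_toAbelianExt {X Y : C} {n : ℕ}
    (z : homCocycles S (projectiveResolution X).complex Y n) :
    extLinearEquiv S X Y n (toAbelianExt S Y n _ z) = toExt S Y n _ z := by
  have hz : ((toAbelianExt S Y n _).quotKerEquivOfSurjective (toAbelianExt_surjective _)).symm
      (toAbelianExt S Y n _ z) = Submodule.Quotient.mk z :=
    (LinearEquiv.symm_apply_eq _).2 rfl
  simp only [extLinearEquiv, LinearEquiv.trans_apply, hz]
  rfl

lemma extLinearEquiv_naturality {X' X Y : C} {n : ℕ} (g : X' ⟶ X) (e : Abelian.Ext.{w} X Y n) :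
    extLinearEquiv S X' Y n ((Abelian.Ext.mk₀ g).comp e (zero_add n)) =
      (((Ext S C n).map g.op).app Y).hom (extLinearEquiv S X Y n e) := by
  let φ : (projectiveResolution X').Hom (projectiveResolution X) g :=
    { hom := ProjectiveResolution.lift g _ _
      hom_f_zero_comp_π_f_zero := by simpa using ProjectiveResolution.lift_commutes_zero g _ _ }
  obtain ⟨z, rfl⟩ := toAbelianExt_surjective (S := S) (projectiveResolution X) e
  rw [mk₀_comp_toAbelianExt φ, extLinearEquiv_toAbelianExt, extLinearEquiv_toAbelianExt,
    map_toExt φ]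

end ExtEquiv

end ExtComparison

/-! ### Comparison with `localCohomology` -/

section LocalCohomology

open Limits Opposite

instance : PreservesFilteredColimitsOfSize.{0, 0} (forget (ModuleCat.{u} A)) :=
  preservesFilteredColimitsOfSize_shrink _

lemma exists_map_eq_zero_of_isColimit {J : Type} [SmallCategory J] [IsFiltered J]
    {F : J ⥤ ModuleCat.{u} A} {c : Cocone F} (hc : IsColimit c) {j : J} {e : F.obj j}
    (he : (c.ι.app j).hom e = 0) : ∃ k, ∃ f : j ⟶ k, (F.map f).hom e = 0 := by
  have he' : c.ι.app j e = c.ι.app j 0 := he.trans (map_zero _).symm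
  obtain ⟨k, f, g, hfg⟩ := Concrete.isColimit_exists_of_rep_eq F hc e 0 he'
  exact ⟨k, f, hfg.trans (map_zero _)⟩

variable (I : Ideal A) (i : ℕ) (M : Type u) [AddCommGroup M] [Module A M]

/-- The colimit cocone defining `localCohomology I i`, evaluated at `M`. -/
def localCohomologyCocone : Cocone (localCohomology.diagram (localCohomology.idealPowersDiagram I) i
    ⋙ (evaluation _ _).obj (ModuleCat.of A M)) :=
  have := localCohomology.hasColimitDiagram.{u, 0} (localCohomology.idealPowersDiagram I) i
  ((evaluation _ _).obj (ModuleCat.of A M)).mapCocone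
    (colimit.cocone (localCohomology.diagram (localCohomology.idealPowersDiagram I) i))

/-- Colimits of functors are computed pointwise. -/
def isColimitLocalCohomologyCocone : IsColimit (localCohomologyCocone I i M) :=
  have := localCohomology.hasColimitDiagram.{u, 0} (localCohomology.idealPowersDiagram I) i
  isColimitOfPreserves _ (colimit.isColimit _)

namespace LocCoh

/-- The structure map `Ext^i(A/I^t, M) → H^i_I(M)` of Mathlib's local cohomology, on the `Ext`
groups of the derived category. -/
def localCohomologyι (t : ℕ) :
    Abelian.Ext.{u} (ModuleCat.of A (A ⧸ I ^ t)) (ModuleCat.of A M) i →ₗ[A]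
      (localCohomology I i).obj (ModuleCat.of A M) :=
  (show _ →ₗ[A] _ from ((localCohomologyCocone I i M).ι.app (op (op t))).hom) ∘ₗ
    (extLinearEquiv A _ _ i).toLinearMap

lemma extLinearEquiv_transition {s t : ℕ} (h : s ≤ t) (e) :
    extLinearEquiv A _ _ i (transition I i M s t h e) =
      ((localCohomology.diagram (localCohomology.idealPowersDiagram I) i ⋙
        (evaluation _ _).obj (ModuleCat.of A M)).map (homOfLE h).op.op).hom
          (extLinearEquiv A _ _ i e) :=
  extLinearEquiv_naturality _ e

lemma localCohomologyι_transition {s t : ℕ} (h : s ≤ t) (e) :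
    localCohomologyι I i M t (transition I i M s t h e) = localCohomologyι I i M s e := by
  have hw := congrArg (fun φ => φ.hom (extLinearEquiv A _ _ i e))
    ((localCohomologyCocone I i M).w (homOfLE h).op.op)
  have htransition := congrArg ((localCohomologyCocone I i M).ι.app (op (op t))).hom
    (extLinearEquiv_transition I i M h e)
  exact htransition.trans hw

lemma exists_transition_eq_zero {t : ℕ} {e} (he : localCohomologyι I i M t e = 0) :
    ∃ u, ∃ h : t ≤ u, transition I i M t u h e = 0 := by
  obtain ⟨⟨⟨v⟩⟩, f, hf⟩ := exists_map_eq_zero_of_isColimit (isColimitLocalCohomologyCocone I i M) he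
  refine ⟨v, f.unop.unop.le, (extLinearEquiv A _ _ i).injective ?_⟩
  rw [extLinearEquiv_transition, map_zero]
  exact hf

lemma exists_localCohomologyι_eq (z : (localCohomology I i).obj (ModuleCat.of A M)) :
    ∃ t e, localCohomologyι I i M t e = z := by
  obtain ⟨⟨⟨t⟩⟩, e, he⟩ := Concrete.isColimit_exists_rep _ (isColimitLocalCohomologyCocone I i M) z
  obtain ⟨e, rfl⟩ := (extLinearEquiv A _ _ i).surjective e
  exact ⟨t, e, he⟩

/-- The comparison map from the direct limit of the `Ext` groups of the derived category to
Mathlib's local cohomology. -/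
def toLocalCohomology :
    LocCoh I i M →ₗ[A] (localCohomology I i).obj (ModuleCat.of A M) :=
  Module.DirectLimit.lift A ℕ _ (transition I i M) (localCohomologyι I i M)
    fun _ _ h e => localCohomologyι_transition I i M h e

lemma toLocalCohomology_of (t : ℕ) (e) :
    toLocalCohomology I i M (of I i M t e) = localCohomologyι I i M t e :=
  Module.DirectLimit.lift_of _ _ _

lemma toLocalCohomology_bijective : Function.Bijective (toLocalCohomology I i M) := by
  refine ⟨(injective_iff_map_eq_zero _).2 fun z hz => ?_, fun z => ?_⟩
  · obtain ⟨t, e, rfl⟩ := exists_of z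
    rw [toLocalCohomology_of] at hz
    exact of_eq_zero_iff.2 (exists_transition_eq_zero I i M hz)
  · obtain ⟨t, e, rfl⟩ := exists_localCohomologyι_eq I i M z
    exact ⟨of I i M t e, toLocalCohomology_of I i M t e⟩

lemma forall_smul_eq_zero_iff (r : A) :
    (∀ z : LocCoh I i M, r • z = 0) ↔
      ∀ m : (localCohomology I i).obj (ModuleCat.of A M), r • m = 0 := by
  rw [(toLocalCohomology_bijective I i M).2.forall]
  simp only [← map_smul, map_eq_zero_iff _ (toLocalCohomology_bijective I i M).1]

end LocCoh

end LocalCohomology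

lemma annihilatesBelow_iff_locH (I : Ideal R) (M : Type) [AddCommGroup M] [Module R M] (c : ℕ) :
    AnnihilatesBelow I I M c ↔ ∀ i : ℕ, i < c → ∀ r ∈ I, ∀ m : locH I i M, r • m = 0 :=
  forall₄_congr fun i _ r _ => LocCoh.forall_smul_eq_zero_iff I i M r

lemma isRelQuasiBuchsbaum_iff {I : Ideal R} {M : Type} [AddCommGroup M] [Module R M] {c : ℕ}
    (hc : IsCd I M c) (ha : IsAra I M c) :
    IsRelQuasiBuchsbaum I M ↔
      ∀ x : Fin c → R, IsRsop I M x → (∀ j, x j ∈ I ^ 2) → IsWeakSeq I M x := by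
  refine ⟨?_, fun h => ⟨c, hc, ha, h⟩⟩
  rintro ⟨c', -, ha', h⟩
  obtain rfl : c' = c := ha'.unique ha
  exact h

theorem theorem_4_1_general [IsNoetherianRing R] (I : Ideal R)
    (hjac : I ≤ (⊥ : Ideal R).jacobson)
    (M : Type) [AddCommGroup M] [Module R M] [Module.Finite R M] (c : ℕ)
    (hrad : ∃ x : Fin c → R, (Ideal.span (Set.range x) + Module.annihilator R M).radical =
      (I + Module.annihilator R M).radical) :
    [∀ x : Fin c → R, IsRsop I M x → (∀ j, x j ∈ I ^ 2) → IsWeakSeq I M x,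
      ∃ x : Fin c → R, IsRsop I M x ∧ (∀ j, x j ∈ I ^ 2) ∧ IsWeakSeq I M x,
      ∀ i : ℕ, i < c → ∀ r ∈ I, ∀ m : locH I i M, r • m = 0].TFAE := by
  rw [← annihilatesBelow_iff_locH]
  tfae_have 1 → 2 := by
    obtain ⟨x, hx⟩ := hrad
    obtain ⟨y, hy, hy2⟩ := exists_isRsop_forall_mem_sq hx
    exact fun h => ⟨y, hy, hy2, h y hy hy2⟩
  tfae_have 2 → 3 := fun ⟨x, _, hx2, hw⟩ => hw.annihilatesBelow hx2
  tfae_have 3 → 1 := by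
    intro h x hx hx2
    refine h.isWeakSeq hx2 ((Ideal.span_le.2 ?_).trans hjac) ?_
    · rintro _ ⟨j, rfl⟩
      exact hx.1 j
    · exact (le_sup_left.trans Ideal.le_radical).trans hx.2.ge
  tfae_finish

/-- **Theorem 4.1.** Suppose `I` is contained in the Jacobson radical of `R` and
`cd(I,M) = ara(I,M)`. The following are equivalent:
(i) `M` is `I`-relative quasi Buchsbaum;
(ii) there exists an `I`-relative system of parameters of `M` contained in `I²` which is an
`I`-weak sequence on `M`;
(iii) `I • H^i_I(M) = 0` for all `0 ≤ i < cd(I,M)`. -/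
theorem theorem_4_1 [IsNoetherianRing R] (I : Ideal R)
    (hjac : I ≤ (⊥ : Ideal R).jacobson)
    (M : Type) [AddCommGroup M] [Module R M] [Module.Finite R M]
    (c : ℕ) (hc : IsCd I M c) (ha : IsAra I M c) :
    (IsRelQuasiBuchsbaum I M ↔
      ∃ x : Fin c → R, IsRsop I M x ∧ (∀ j, x j ∈ I ^ 2) ∧ IsWeakSeq I M x) ∧
    ((∃ x : Fin c → R, IsRsop I M x ∧ (∀ j, x j ∈ I ^ 2) ∧ IsWeakSeq I M x) ↔
      ∀ i : ℕ, i < c → ∀ r ∈ I, ∀ m : locH I i M, r • m = 0) := by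
  have htfae := theorem_4_1_general I hjac M c ha.1
  exact ⟨(isRelQuasiBuchsbaum_iff hc ha).trans (htfae.out 0 1), htfae.out 1 2⟩
end
end

section
/- Suppose c := cd(a,M) = ara(a,M) > 0. Then the following are equivalent: (i) for every generating set {b_1,...,b_t} of a, the canonical map λ^i_M : H^i(b_1,...,b_t; M) → H^i_a(M) from Koszul cohomology to local cohomology is surjective for all 0 ≤ i ≤ c-1; (ii) there exists an f-generating set {a_1,...,a_s} of a with respect to M such that the canonical map λ^i_M : H^i(a_1,...,a_s; M) → H^i_a(M) is surjective for all 0 ≤ i ≤ c-1. -/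
/-!
Formalization of a statement from "A theory of relative generalized Cohen-Macaulay modules"
by Divaani-Aazar, Ghanbari Doust, Tousi and Zakeri.

Throughout, `R` is a commutative Noetherian ring and `M` a finitely generated `R`-module.
Conventions used below:
* `locH I i M` is the local cohomology module `H^i_I(M)` (Mathlib's `localCohomology`).
* Conditions `cd(I,M) = c`, `ara(I,M) = n`, `f_I(M) = f`, `grade(I,M) = r` are expressed by
  the predicates `IsCd`, `IsAra`, `IsFinDim`, `IsGrade`.
* Sequences are given as functions `Fin r → R`; `pSpan M x i = ⟨x_0,…,x_{i-1}⟩M`.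
* Koszul (co)homology is defined via the explicit (co)chain complex on the `p`-element
  subsets of `{0,…,n-1}`, and the canonical map `λ^i` into local cohomology is the structure
  map (at exponent 1) into the direct limit of Koszul cohomologies of powers of the sequence,
  which is the realization of `H^i_{⟨x⟩}(M)` used in the paper (2.1(iv)).
-/

open CategoryTheory

noncomputable section

variable {R : Type} [CommRing R]

/-! ### Koszul cochain complexes, Koszul cohomology, and the canonical maps
`λ^i_M : H^i(x; M) → H^i_{⟨x⟩}(M)` -/

/-- The degree `p` term of the Koszul cochain complex of `M` on `n` elements:
functions on the `p`-element subsets of `{1, …, n}` with values in `M`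
(i.e. `Hom(Λ^p R^n, M)`). -/
abbrev KM (M : Type) (n p : ℕ) : Type := {s : Finset (Fin n) // s.card = p} → M

section Koszul

variable {M : Type} [AddCommGroup M] [Module R M]

/-- The Koszul cochain differential `K^p(x; M) → K^{p+1}(x; M)`. -/
def kd {n : ℕ} (x : Fin n → R) (p : ℕ) : KM M n p →ₗ[R] KM M n (p + 1) where
  toFun f t := ∑ j ∈ t.1.attach,
    ((-1 : R) ^ (t.1.filter (fun a => a < j.1)).card * x j.1) •
      f ⟨t.1.erase j.1, by rw [Finset.card_erase_of_mem j.2, t.2]; omega⟩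
  map_add' f g := by
    funext t
    simp [smul_add, Finset.sum_add_distrib]
  map_smul' r f := by
    funext t
    simp [Finset.smul_sum, smul_comm r]

/-- The transition map of Koszul cochain complexes raising the exponent of the defining
sequence by `e`: in degree `p` it multiplies the component at a subset `s`
by `(∏_{j ∈ s} x_j)^e`. -/
def kt {n : ℕ} (x : Fin n → R) (e p : ℕ) : KM M n p →ₗ[R] KM M n p where
  toFun f s := (∏ j ∈ s.1, x j) ^ e • f s
  map_add' f g := by funext s; simp [smul_add]
  map_smul' r f := by funext s; simp [smul_comm r]

/-- The transition maps are maps of cochain complexes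
`K^•(x^u; M) → K^•(x^{u+e}; M)`. -/
theorem kt_kd {n : ℕ} (x : Fin n → R) (u e p : ℕ) :
    (kt (M := M) x e (p + 1)).comp (kd (fun j => x j ^ u) p)
      = (kd (fun j => x j ^ (u + e)) p).comp (kt x e p) := by
  apply LinearMap.ext; intro f
  funext t
  simp only [LinearMap.comp_apply, kd, kt, LinearMap.coe_mk, AddHom.coe_mk]
  rw [Finset.smul_sum]
  refine Finset.sum_congr rfl fun j _ => ?_
  rw [smul_smul, smul_smul]
  congr 1
  rw [← Finset.mul_prod_erase t.1 x j.2]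
  ring

end Koszul

/-- The `R`-module of Koszul `p`-cocycles of `M` with respect to `y`. -/
def kZ {n : ℕ} (y : Fin n → R) (M : Type) [AddCommGroup M] [Module R M] (p : ℕ) :
    Submodule R (KM M n p) :=
  LinearMap.ker (kd y p)

/-- The `R`-module of Koszul `p`-coboundaries of `M` with respect to `y`. -/
def kB {n : ℕ} (y : Fin n → R) (M : Type) [AddCommGroup M] [Module R M] :
    (p : ℕ) → Submodule R (KM M n p)
  | 0 => ⊥
  | (q + 1) => LinearMap.range (kd y q)

/-- The `p`-th Koszul cohomology module `H^p(y; M)`: cocycles modulo coboundaries. -/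
abbrev Hk {n : ℕ} (y : Fin n → R) (M : Type) [AddCommGroup M] [Module R M] (p : ℕ) :=
  kZ y M p ⧸ ((kB y M p ⊓ kZ y M p).comap (kZ y M p).subtype)

section KoszulMaps

variable {M : Type} [AddCommGroup M] [Module R M]

theorem kt_mem_kZ {n : ℕ} (x : Fin n → R) {u v : ℕ} (h : u ≤ v) (p : ℕ) :
    ∀ f ∈ kZ (fun j => x j ^ (u + 1)) M p,
      kt x (v - u) p f ∈ kZ (fun j => x j ^ (v + 1)) M p := by
  intro f hf
  have he : u + 1 + (v - u) = v + 1 := by omega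
  have hc := congrArg (fun φ => φ f) (kt_kd (M := M) x (u + 1) (v - u) p)
  simp only [LinearMap.comp_apply] at hc
  rw [he] at hc
  simp only [kZ, LinearMap.mem_ker] at hf ⊢
  rw [← hc, hf, map_zero]

theorem kt_mem_kB {n : ℕ} (x : Fin n → R) {u v : ℕ} (h : u ≤ v) (p : ℕ) :
    ∀ f ∈ kB (fun j => x j ^ (u + 1)) M p,
      kt x (v - u) p f ∈ kB (fun j => x j ^ (v + 1)) M p := by
  intro f hf
  cases p with
  | zero =>
      simp only [kB, Submodule.mem_bot] at hf ⊢
      rw [hf, map_zero]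
  | succ q =>
      simp only [kB, LinearMap.mem_range] at hf ⊢
      obtain ⟨g, hg⟩ := hf
      refine ⟨kt x (v - u) q g, ?_⟩
      have he : u + 1 + (v - u) = v + 1 := by omega
      have hc := congrArg (fun φ => φ g) (kt_kd (M := M) x (u + 1) (v - u) q)
      simp only [LinearMap.comp_apply] at hc
      rw [he] at hc
      rw [← hc, hg]

end KoszulMaps

/-- The map `H^p(x^{u+1}; M) → H^p(x^{v+1}; M)`, `u ≤ v`, induced by the transition map of
Koszul cochain complexes. -/
def ktH {n : ℕ} (x : Fin n → R) (M : Type) [AddCommGroup M] [Module R M] (p : ℕ)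
    (u v : ℕ) (h : u ≤ v) :
    Hk (fun j => x j ^ (u + 1)) M p →ₗ[R] Hk (fun j => x j ^ (v + 1)) M p :=
  Submodule.mapQ _ _ ((kt x (v - u) p).restrict (kt_mem_kZ x h p)) (by
    rintro ⟨f, hfZ⟩ hfN
    simp only [Submodule.mem_comap, Submodule.mem_inf, Submodule.coe_subtype] at hfN ⊢
    exact ⟨kt_mem_kB x h p f hfN.1, kt_mem_kZ x h p f hfN.2⟩)

/-- `H^p_{⟨x⟩}(M)`, realized as the direct limit of the Koszul cohomology modules
`H^p(x^{u+1}; M)` along the transition maps (cf. 2.1(iv) in the paper). -/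
abbrev KLoc {n : ℕ} (x : Fin n → R) (M : Type) [AddCommGroup M] [Module R M] (p : ℕ) :=
  Module.DirectLimit (fun u : ℕ => Hk (fun j => x j ^ (u + 1)) M p)
    (fun u v h => ktH x M p u v h)

/-- Transport of Koszul cohomology along an equality of defining sequences. -/
def castHk {n : ℕ} (M : Type) [AddCommGroup M] [Module R M] (p : ℕ) {y z : Fin n → R}
    (h : y = z) : Hk y M p →ₗ[R] Hk z M p :=
  Eq.rec (motive := fun w _ => Hk y M p →ₗ[R] Hk w M p) LinearMap.id h

/-- The canonical map `λ^p_M : H^p(x; M) → H^p_{⟨x⟩}(M)`, i.e. the structure map of the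
direct limit at exponent `1`. -/
def klambda {n : ℕ} (x : Fin n → R) (M : Type) [AddCommGroup M] [Module R M] (p : ℕ) :
    Hk x M p →ₗ[R] KLoc x M p :=
  (Module.DirectLimit.of R ℕ (fun u : ℕ => Hk (fun j => x j ^ (u + 1)) M p)
      (fun u v h => ktH x M p u v h) 0).comp
    (castHk M p (funext fun j => by rw [zero_add, pow_one] :
      x = fun j => x j ^ (0 + 1)))

/-- Surjectivity of the canonical map `λ^p_M : H^p(x; M) → H^p_{⟨x⟩}(M)`. -/
def LambdaSurj {n : ℕ} (x : Fin n → R) (M : Type) [AddCommGroup M] [Module R M] (p : ℕ) :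
    Prop :=
  Function.Surjective (klambda x M p)

/-!
A generating set of `I` that is filter regular in every order exists by prime avoidance: if
`x_1, …, x_k` is one for a smaller ideal, choose `x ∈ I ∖ ⟨x_1, …, x_k⟩` outside the associated
primes not containing `I` of all the quotients `M ⧸ ⟨T⟩M` with `T ⊆ {x_1, …, x_k}`. Adjacent filter
regular elements may be swapped, so `x` can be adjoined in any position, and the process stops
because `R` is Noetherian.

It remains to see that surjectivity of `λ^p` depends only on the ideal generated by the sequence,
and comparing two sequences with their concatenation it is enough to adjoin one `x_j ∈ ⟨x_S⟩`.
Contraction operators are homotopies showing that `⟨x_S⟩` annihilates the cohomology of the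
complex `K_S` of the family `x_S`. In the exact sequence `0 → K_S[-1] → K_{S ∪ j} → K_S → 0` the
connecting map is multiplication by `x_j`, hence zero on cohomology, so cocycles lift. On the
kernel the transition maps to higher exponents multiply by powers of `x_j`, so the kernel vanishes
in the direct limit. Hence surjectivity of `λ^p` passes from `S` to `S ∪ j` and back.
-/

section FilterRegular

open scoped Pointwise

variable {M : Type*} [AddCommGroup M] [Module R M] {I : Ideal R}

/-- `x` is an `I`-filter regular element modulo the submodule `L` of `M`. The condition
`(L :_M x) ⊆ ⋃ₜ (L :_M I ^ t)` is encoded by a radical, which agrees with it for finitely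
generated `I` and is easier to manipulate. -/
def IsFilterRegElem (I : Ideal R) (L : Submodule R M) (x : R) : Prop :=
  ∀ m : M, x • m ∈ L → I ≤ (L.colon {m}).radical

theorem IsFilterRegElem.exists_forall_pow_smul_mem {L : Submodule R M} {x : R}
    (hx : IsFilterRegElem I L x) (hI : I.FG) {m : M} (hm : x • m ∈ L) :
    ∃ t : ℕ, ∀ a ∈ I ^ t, a • m ∈ L := by
  obtain ⟨t, ht⟩ := Ideal.exists_pow_le_of_le_radical_of_fg (hx m hm) hI
  exact ⟨t, fun a ha => Submodule.mem_colon_singleton.1 (ht ha)⟩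

theorem mem_sup_smul_top {L : Submodule R M} {y : R} {m : M} :
    m ∈ L ⊔ y • (⊤ : Submodule R M) ↔ ∃ m' : M, m - y • m' ∈ L := by
  simp only [Submodule.mem_sup, Submodule.mem_smul_pointwise_iff_exists, Submodule.mem_top,
    true_and, exists_exists_eq_and]
  constructor
  · rintro ⟨l, hl, m', rfl⟩
    exact ⟨m', by rwa [add_sub_cancel_right]⟩
  · rintro ⟨m', hm'⟩
    exact ⟨_, hm', m', sub_add_cancel _ _⟩

theorem IsFilterRegElem.swap {L : Submodule R M} {x y : R} (hx : IsFilterRegElem I L x)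
    (hy : IsFilterRegElem I (L ⊔ x • (⊤ : Submodule R M)) y) :
    IsFilterRegElem I (L ⊔ y • (⊤ : Submodule R M)) x := by
  intro m hm i hi
  obtain ⟨m', hm'⟩ := mem_sup_smul_top.1 hm
  have hym' : y • m' ∈ L ⊔ x • (⊤ : Submodule R M) := by
    refine mem_sup_smul_top.2 ⟨m, ?_⟩
    rwa [← neg_sub, L.neg_mem_iff]
  obtain ⟨t, ht⟩ := hy m' hym' hi
  obtain ⟨m'', hm''⟩ := mem_sup_smul_top.1 (Submodule.mem_colon_singleton.1 ht)
  have hxL : x • (i ^ t • m - y • m'') ∈ L := by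
    have key : x • (i ^ t • m - y • m'') =
        i ^ t • (x • m - y • m') + y • (i ^ t • m' - x • m'') := by
      module
    rw [key]
    exact L.add_mem (L.smul_mem _ hm') (L.smul_mem _ hm'')
  obtain ⟨s, hs⟩ := hx _ hxL hi
  refine ⟨s + t, Submodule.mem_colon_singleton.2 (mem_sup_smul_top.2 ⟨i ^ s • m'', ?_⟩)⟩
  have key : i ^ (s + t) • m - y • i ^ s • m'' = i ^ s • (i ^ t • m - y • m'') := by
    rw [pow_add]
    module
  exact key ▸ Submodule.mem_colon_singleton.1 hs

theorem isFilterRegElem_of_associatedPrimes [IsNoetherianRing R] {L : Submodule R M} {x : R}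
    (h : ∀ P ∈ associatedPrimes R (M ⧸ L), x ∈ P → I ≤ P) : IsFilterRegElem I L x := by
  intro m hm
  rw [← Ideal.sInf_minimalPrimes]
  refine le_sInf fun P hP => h P ?_ (hP.1.2 (Submodule.mem_colon_singleton.2 hm))
  obtain ⟨m', rfl⟩ := Submodule.exists_eq_colon_of_mem_minimalPrimes hP
  refine (isAssociatedPrime_iff).2 ⟨hP.1.1, L.mkQ m', ?_⟩
  ext r
  rw [Submodule.mem_colon_singleton, Submodule.mem_colon_singleton, ← map_smul,
    Submodule.mem_bot, Submodule.mkQ_apply, Submodule.Quotient.mk_eq_zero]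

theorem exists_mem_notMem_forall_isFilterRegElem [IsNoetherianRing R] [Module.Finite R M]
    {J : Ideal R} (hIJ : ¬ I ≤ J) {ι : Type*} [Finite ι] (L : ι → Submodule R M) :
    ∃ x ∈ I, x ∉ J ∧ ∀ i, IsFilterRegElem I (L i) x := by
  let bad : Set (Ideal R) := ⋃ i, {P ∈ associatedPrimes R (M ⧸ L i) | ¬ I ≤ P}
  have bad_finite : bad.Finite := Set.finite_iUnion fun i =>
    (associatedPrimes.finite R (M ⧸ L i)).subset fun P hP => hP.1
  have not_le_bad : ∀ P ∈ bad, P.IsPrime ∧ ¬ I ≤ P := fun P hP =>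
    have ⟨_, hi⟩ := Set.mem_iUnion.1 hP
    ⟨hi.1.isPrime, hi.2⟩
  have avoid : ¬ (I : Set R) ⊆ ⋃ P ∈ insert J bad, ((id P : Ideal R) : Set R) := by
    rw [Ideal.subset_union_prime_finite (f := id) (bad_finite.insert J) J J fun P hP hne _ =>
      (not_le_bad P (hP.resolve_left hne)).1]
    rintro ⟨P, rfl | hP, hle⟩
    exacts [hIJ hle, (not_le_bad P hP).2 hle]
  obtain ⟨x, hxI, hx⟩ := Set.not_subset.1 avoid
  simp only [Set.mem_iUnion, not_exists, id] at hx
  refine ⟨x, hxI, hx J (Set.mem_insert _ _), fun i =>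
    isFilterRegElem_of_associatedPrimes fun P hP hxP => ?_⟩
  by_contra hIP
  exact hx P (Set.mem_insert_of_mem _ (Set.mem_iUnion.2 ⟨i, hP, hIP⟩)) hxP

/-- An unconditioned `I`-filter regular set on `M`: each element of `A` is filter regular modulo
`⟨T⟩M` for every set `T` of other elements of `A`. This order-free form of
`IsUncondFilterRegSeq` is suited to adjoining elements one at a time. -/
def IsFilterRegSet (I : Ideal R) (M : Type*) [AddCommGroup M] [Module R M] (A : Set R) : Prop :=
  ∀ T ⊆ A, ∀ x ∈ A, x ∉ T → IsFilterRegElem I (Ideal.span T • (⊤ : Submodule R M)) x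

theorem span_insert_smul_top (x : R) (T : Set R) :
    Ideal.span (insert x T) • (⊤ : Submodule R M)
      = Ideal.span T • (⊤ : Submodule R M) ⊔ x • (⊤ : Submodule R M) := by
  rw [Ideal.span_insert, Submodule.sup_smul, sup_comm, Submodule.ideal_span_singleton_smul]

theorem IsFilterRegSet.insert {A : Set R} (hA : IsFilterRegSet I M A) {x : R}
    (hx : ∀ T ⊆ A, IsFilterRegElem I (Ideal.span T • (⊤ : Submodule R M)) x) :
    IsFilterRegSet I M (insert x A) := by
  intro T hT y hy hyT
  by_cases hxT : x ∈ T
  · have hyA : y ∈ A := hy.resolve_left fun h => hyT (h ▸ hxT)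
    have hT' : T \ {x} ⊆ A := Set.sdiff_singleton_subset_iff.2 hT
    rw [← Set.insert_sdiff_self_of_mem hxT, span_insert_smul_top]
    refine (hA _ hT' y hyA fun h => hyT h.1).swap ?_
    rw [← span_insert_smul_top]
    exact hx _ (Set.insert_subset hyA hT')
  · have hT' : T ⊆ A := (Set.subset_insert_iff_of_notMem hxT).1 hT
    rcases hy with rfl | hyA
    exacts [hx T hT', hA T hT' y hyA hyT]

theorem exists_finset_span_eq_isFilterRegSet [IsNoetherianRing R] (I : Ideal R) (M : Type*)
    [AddCommGroup M] [Module R M] [Module.Finite R M] :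
    ∃ A : Finset R, Ideal.span (A : Set R) = I ∧ IsFilterRegSet I M (A : Set R) := by
  classical
  obtain ⟨J, ⟨A, rfl, hAI, hA⟩, hmax⟩ := set_has_maximal_iff_noetherian.2 ‹IsNoetherianRing R›
    {J | ∃ A : Finset R, Ideal.span (A : Set R) = J ∧ J ≤ I ∧ IsFilterRegSet I M (A : Set R)}
    ⟨⊥, ∅, by simp, bot_le, fun _ _ x hx => by simp at hx⟩
  refine ⟨A, hAI.antisymm (by_contra fun hIA => ?_), hA⟩
  obtain ⟨x, hxI, hxA, hx⟩ := exists_mem_notMem_forall_isFilterRegElem hIA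
    fun T : A.powerset => Ideal.span (T.1 : Set R) • (⊤ : Submodule R M)
  have hspan : Ideal.span ((insert x A : Finset R) : Set R)
      = Ideal.span {x} ⊔ Ideal.span (A : Set R) := by
    rw [Finset.coe_insert, Ideal.span_insert]
  refine hmax _ ⟨insert x A, hspan, sup_le ?_ hAI, ?_⟩ ?_
  · rwa [Ideal.span_singleton_le_iff_mem]
  · rw [Finset.coe_insert]
    refine hA.insert fun T hT => ?_
    lift T to Finset R using A.finite_toSet.subset hT
    exact hx ⟨T, Finset.mem_powerset.2 (Finset.coe_subset.1 hT)⟩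
  · rwa [right_lt_sup, Ideal.span_singleton_le_iff_mem]

end FilterRegular

theorem IsFilterRegSet.isUncondFilterRegSeq {I : Ideal R} (hI : I.FG) {M : Type}
    [AddCommGroup M] [Module R M] {s : ℕ} {a : Fin s → R} (ha : Function.Injective a)
    (h : IsFilterRegSet I M (Set.range a)) : IsUncondFilterRegSeq I M a := by
  intro σ i m hm
  refine IsFilterRegElem.exists_forall_pow_smul_mem
    (h _ ((Set.image_subset_range _ _).trans (Set.range_comp_subset_range σ a)) _
      ⟨σ i, rfl⟩ ?_) hI hm
  rintro ⟨j, hj, hij⟩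
  exact hj.ne (σ.injective (ha hij))

theorem exists_span_eq_isUncondFilterRegSeq [IsNoetherianRing R] (I : Ideal R) (M : Type)
    [AddCommGroup M] [Module R M] [Module.Finite R M] :
    ∃ (s : ℕ) (a : Fin s → R), Ideal.span (Set.range a) = I ∧ IsUncondFilterRegSeq I M a := by
  obtain ⟨A, hspan, hA⟩ := exists_finset_span_eq_isFilterRegSet I M
  have hrange : Set.range ((↑) ∘ A.equivFin.symm : Fin A.card → R) = A := by
    rw [Set.range_comp, A.equivFin.symm.range_eq_univ, Set.image_univ, Subtype.range_coe]
  refine ⟨A.card, (↑) ∘ A.equivFin.symm, by rw [hrange, hspan],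
    IsFilterRegSet.isUncondFilterRegSeq (IsNoetherian.noetherian I)
      (Subtype.val_injective.comp A.equivFin.symm.injective) (hrange.symm ▸ hA)⟩

section KoszulCochains

variable {ι : Type*} {M : Type*} [AddCommGroup M] [Module R M]

/-- The diagonal map between Koszul complexes induced by rescaling a sequence by `c`; for
`c = x ^ e` it is the transition map of the system defining local cohomology. -/
def koszulScale (c : ι → R) : (Finset ι → M) →ₗ[R] (Finset ι → M) where
  toFun f s := (∏ j ∈ s, c j) • f s
  map_add' f g := by funext s; simp [smul_add]
  map_smul' r f := by funext s; simp [smul_comm r]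

theorem koszulScale_apply (c : ι → R) (f : Finset ι → M) (s : Finset ι) :
    koszulScale c f s = (∏ j ∈ s, c j) • f s := rfl

theorem koszulScale_koszulScale (c c' : ι → R) (f : Finset ι → M) :
    koszulScale c (koszulScale c' f) = koszulScale (c * c') f := by
  funext s
  simp only [koszulScale_apply, smul_smul, Pi.mul_apply, Finset.prod_mul_distrib]

/-- The degree `p` cochains of the Koszul complex on the subfamily indexed by `S`. The degree is
an integer so that contraction lowers it without truncation. -/
def koszulCochains (R : Type) [CommRing R] (M : Type*) [AddCommGroup M] [Module R M]
    (S : Finset ι) (p : ℤ) : Submodule R (Finset ι → M) where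
  carrier := {f | ∀ s : Finset ι, ¬(s ⊆ S ∧ (s.card : ℤ) = p) → f s = 0}
  add_mem' hf hg s hs := by rw [Pi.add_apply, hf s hs, hg s hs, add_zero]
  zero_mem' _ _ := rfl
  smul_mem' r f hf s hs := by rw [Pi.smul_apply, hf s hs, smul_zero]

variable {S : Finset ι} {p : ℤ} {f : Finset ι → M}

theorem koszulCochains_mono {T : Finset ι} (h : S ⊆ T) :
    koszulCochains R M S p ≤ koszulCochains R M T p :=
  fun _ hf s hs => hf s fun hs' => hs ⟨hs'.1.trans h, hs'.2⟩

theorem koszulScale_mem_koszulCochains (c : ι → R) (hf : f ∈ koszulCochains R M S p) :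
    koszulScale c f ∈ koszulCochains R M S p :=
  fun s hs => by rw [koszulScale_apply, hf s hs, smul_zero]

end KoszulCochains

section KoszulOperators

variable {ι : Type*} [LinearOrder ι]

/-- The sign `(-1)^{#{a ∈ s : a < k}}` of moving `k` into position in front of the elements of
`s` that exceed it. -/
def koszulSign (R : Type) [CommRing R] (k : ι) (s : Finset ι) : R :=
  (-1) ^ (s.filter (· < k)).card

theorem koszulSign_mul_self (k : ι) (s : Finset ι) : koszulSign R k s * koszulSign R k s = 1 := by
  rw [koszulSign, ← mul_pow, neg_one_mul, neg_neg, one_pow]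

theorem koszulSign_insert (k : ι) {j : ι} {s : Finset ι} (h : j ∉ s) :
    koszulSign R k (insert j s) = (if j < k then -1 else 1) * koszulSign R k s := by
  unfold koszulSign
  rw [Finset.filter_insert]
  split_ifs with hjk
  · rw [Finset.card_insert_of_notMem fun hmem => h (Finset.mem_filter.1 hmem).1, pow_succ']
  · rw [one_mul]

theorem koszulSign_erase (k : ι) {j : ι} {s : Finset ι} (h : j ∈ s) :
    koszulSign R k (s.erase j) = (if j < k then -1 else 1) * koszulSign R k s := by
  conv_rhs => rw [← Finset.insert_erase h, koszulSign_insert k (Finset.notMem_erase j s)]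
  split_ifs <;> simp

variable {M : Type*} [AddCommGroup M] [Module R M]

/-- Exterior multiplication by the basis covector `k` on the functions `Finset ι → M`, which are
the Koszul cochains of all degrees at once. -/
def koszulWedge (R : Type) [CommRing R] [Module R M] (k : ι) :
    (Finset ι → M) →ₗ[R] (Finset ι → M) where
  toFun f s := if k ∈ s then koszulSign R k s • f (s.erase k) else 0
  map_add' f g := by funext s; by_cases h : k ∈ s <;> simp [h]
  map_smul' r f := by funext s; by_cases h : k ∈ s <;> simp [h, smul_comm r]

/-- Contraction with the basis vector `k`, the adjoint of `koszulWedge R k`. -/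
def koszulContract (R : Type) [CommRing R] [Module R M] (k : ι) :
    (Finset ι → M) →ₗ[R] (Finset ι → M) where
  toFun f s := if k ∈ s then 0 else koszulSign R k s • f (insert k s)
  map_add' f g := by funext s; by_cases h : k ∈ s <;> simp [h]
  map_smul' r f := by funext s; by_cases h : k ∈ s <;> simp [h, smul_comm r]

/-- The projection onto the cochains supported on sets not containing `j`, with kernel the range
of `koszulWedge R j`. -/
def koszulAvoid (R : Type) [CommRing R] [Module R M] (j : ι) :
    (Finset ι → M) →ₗ[R] (Finset ι → M) where
  toFun f s := if j ∈ s then 0 else f s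
  map_add' f g := by funext s; by_cases h : j ∈ s <;> simp [h]
  map_smul' r f := by funext s; by_cases h : j ∈ s <;> simp [h]

/-- The differential of the Koszul complex on the subfamily `y_k`, `k ∈ S`. Letting `S` vary
inside a fixed `ι` makes the complexes of different subfamilies comparable. -/
def koszulD (S : Finset ι) (y : ι → R) : (Finset ι → M) →ₗ[R] (Finset ι → M) :=
  ∑ k ∈ S, y k • koszulWedge R k

theorem koszulWedge_apply (k : ι) (f : Finset ι → M) (s : Finset ι) :
    koszulWedge R k f s = if k ∈ s then koszulSign R k s • f (s.erase k) else 0 := rfl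

theorem koszulContract_apply (k : ι) (f : Finset ι → M) (s : Finset ι) :
    koszulContract R k f s = if k ∈ s then 0 else koszulSign R k s • f (insert k s) := rfl

theorem koszulAvoid_apply (j : ι) (f : Finset ι → M) (s : Finset ι) :
    koszulAvoid R j f s = if j ∈ s then 0 else f s := rfl

theorem koszulD_apply (S : Finset ι) (y : ι → R) (f : Finset ι → M) :
    koszulD S y f = ∑ k ∈ S, y k • koszulWedge R k f := by
  simp only [koszulD, LinearMap.sum_apply, LinearMap.smul_apply]

theorem koszulWedge_self (k : ι) (f : Finset ι → M) :
    koszulWedge R k (koszulWedge R k f) = 0 := by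
  funext s
  simp [koszulWedge_apply]

theorem koszulWedge_anticomm (j k : ι) (f : Finset ι → M) :
    koszulWedge R j (koszulWedge R k f) = -koszulWedge R k (koszulWedge R j f) := by
  rcases eq_or_ne j k with rfl | hne
  · simp [koszulWedge_self]
  funext s
  by_cases hj : j ∈ s <;> by_cases hk : k ∈ s <;>
    simp only [koszulWedge_apply, Pi.neg_apply, hj, hk, Finset.mem_erase, ne_eq, hne, hne.symm,
      not_false_eq_true, and_self, and_false, if_true, if_false, smul_zero, neg_zero]
  rw [smul_smul, smul_smul, Finset.erase_right_comm, koszulSign_erase k hj,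
    koszulSign_erase j hk, ← neg_smul]
  congr 1
  rcases hne.lt_or_gt with h | h <;> simp [h, h.not_gt, mul_comm]

theorem koszulContract_koszulWedge_self (k : ι) (f : Finset ι → M) :
    koszulContract R k (koszulWedge R k f) = koszulAvoid R k f := by
  funext s
  by_cases h : k ∈ s
  · simp only [koszulContract_apply, koszulAvoid_apply, h, if_true]
  · simp only [koszulContract_apply, koszulWedge_apply, koszulAvoid_apply, h, if_false,
      Finset.mem_insert_self, if_true, Finset.erase_insert h, koszulSign_insert k h, lt_irrefl,
      one_mul, smul_smul, koszulSign_mul_self, one_smul]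

theorem koszulAvoid_add_koszulWedge_koszulContract (k : ι) (f : Finset ι → M) :
    koszulAvoid R k f + koszulWedge R k (koszulContract R k f) = f := by
  funext s
  by_cases h : k ∈ s
  · simp only [Pi.add_apply, koszulAvoid_apply, koszulContract_apply, koszulWedge_apply, h,
      if_true, Finset.notMem_erase, if_false, Finset.insert_erase h, koszulSign_erase k h,
      lt_irrefl, one_mul, smul_smul, koszulSign_mul_self, one_smul, zero_add]
  · simp only [Pi.add_apply, koszulAvoid_apply, koszulWedge_apply, h, if_false, add_zero]

theorem koszulContract_koszulWedge_of_ne {j k : ι} (hne : j ≠ k) (f : Finset ι → M) :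
    koszulContract R j (koszulWedge R k f) = -koszulWedge R k (koszulContract R j f) := by
  funext s
  by_cases hj : j ∈ s <;> by_cases hk : k ∈ s <;>
    simp only [koszulWedge_apply, koszulContract_apply, Pi.neg_apply, hj, hk, Finset.mem_erase,
      Finset.mem_insert, ne_eq, hne, hne.symm, or_false, or_true, not_false_eq_true, and_self,
      and_false, if_true, if_false, smul_zero, neg_zero]
  rw [smul_smul, smul_smul, ← neg_smul, koszulSign_insert k hj, koszulSign_erase j hk,
    Finset.erase_insert_of_ne hne]
  congr 1
  rcases hne.lt_or_gt with h | h <;> simp [h, h.not_gt, mul_comm]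

theorem koszulContract_koszulWedge_add (j k : ι) (f : Finset ι → M) :
    koszulContract R j (koszulWedge R k f) + koszulWedge R k (koszulContract R j f)
      = if j = k then f else 0 := by
  split_ifs with h
  · rw [← h, koszulContract_koszulWedge_self, koszulAvoid_add_koszulWedge_koszulContract]
  · rw [koszulContract_koszulWedge_of_ne h, neg_add_cancel]

theorem koszulAvoid_koszulAvoid (j : ι) (f : Finset ι → M) :
    koszulAvoid R j (koszulAvoid R j f) = koszulAvoid R j f := by
  funext s
  by_cases h : j ∈ s <;> simp [koszulAvoid_apply, h]

theorem koszulAvoid_koszulWedge_self (j : ι) (f : Finset ι → M) :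
    koszulAvoid R j (koszulWedge R j f) = 0 := by
  funext s
  by_cases h : j ∈ s <;> simp [koszulAvoid_apply, koszulWedge_apply, h]

theorem koszulAvoid_koszulWedge_of_ne {j k : ι} (hne : j ≠ k) (f : Finset ι → M) :
    koszulAvoid R j (koszulWedge R k f) = koszulWedge R k (koszulAvoid R j f) := by
  funext s
  by_cases h : j ∈ s <;> simp [koszulAvoid_apply, koszulWedge_apply, h, hne]

theorem koszulAvoid_koszulScale (c : ι → R) (j : ι) (f : Finset ι → M) :
    koszulAvoid R j (koszulScale c f) = koszulScale c (koszulAvoid R j f) := by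
  funext s
  by_cases h : j ∈ s <;> simp [koszulAvoid_apply, koszulScale_apply, h]

theorem koszulScale_koszulWedge (c : ι → R) (k : ι) (f : Finset ι → M) :
    koszulScale c (koszulWedge R k f) = c k • koszulWedge R k (koszulScale c f) := by
  funext s
  by_cases h : k ∈ s
  · simp only [koszulScale_apply, koszulWedge_apply, h, if_true, Pi.smul_apply, smul_smul]
    rw [← Finset.mul_prod_erase s c h]
    congr 1
    ring
  · simp [koszulScale_apply, koszulWedge_apply, h]

theorem koszulScale_koszulD (S : Finset ι) (c y : ι → R) (f : Finset ι → M) :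
    koszulScale c (koszulD S y f) = koszulD S (c * y) (koszulScale c f) := by
  simp only [koszulD_apply, map_sum, map_smul, koszulScale_koszulWedge, smul_smul, Pi.mul_apply,
    mul_comm]

theorem koszulD_insert {S : Finset ι} {j : ι} (hj : j ∉ S) (y : ι → R) (f : Finset ι → M) :
    koszulD (insert j S) y f = koszulD S y f + y j • koszulWedge R j f := by
  rw [koszulD_apply, koszulD_apply, Finset.sum_insert hj, add_comm]

theorem koszulD_koszulWedge (S : Finset ι) (y : ι → R) (j : ι) (f : Finset ι → M) :
    koszulD S y (koszulWedge R j f) = -koszulWedge R j (koszulD S y f) := by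
  simp only [koszulD_apply, map_sum, map_smul, koszulWedge_anticomm _ j, smul_neg,
    Finset.sum_neg_distrib]

theorem koszulD_koszulD (S : Finset ι) (y : ι → R) (f : Finset ι → M) :
    koszulD S y (koszulD S y f) = 0 := by
  induction S using Finset.induction_on with
  | empty => simp [koszulD]
  | insert j S hj ih =>
    simp only [koszulD_insert hj, map_add, map_smul, ih, koszulD_koszulWedge, koszulWedge_self]
    simp

theorem koszulContract_koszulD_add (S : Finset ι) (y : ι → R) (j : ι) (f : Finset ι → M) :
    koszulContract R j (koszulD S y f) + koszulD S y (koszulContract R j f)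
      = if j ∈ S then y j • f else 0 := by
  simp only [koszulD_apply, map_sum, map_smul, ← Finset.sum_add_distrib, ← smul_add,
    koszulContract_koszulWedge_add, smul_ite, smul_zero, Finset.sum_ite_eq]

theorem koszulAvoid_koszulD {S : Finset ι} {j : ι} (hj : j ∉ S) (y : ι → R) (f : Finset ι → M) :
    koszulAvoid R j (koszulD S y f) = koszulD S y (koszulAvoid R j f) := by
  rw [koszulD_apply, koszulD_apply, map_sum]
  refine Finset.sum_congr rfl fun k hk => ?_
  rw [map_smul, koszulAvoid_koszulWedge_of_ne (ne_of_mem_of_not_mem hk hj).symm]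

theorem koszulAvoid_koszulD_insert {S : Finset ι} {j : ι} (hj : j ∉ S) (y : ι → R)
    (f : Finset ι → M) :
    koszulAvoid R j (koszulD (insert j S) y f) = koszulD S y (koszulAvoid R j f) := by
  rw [koszulD_insert hj, map_add, map_smul, koszulAvoid_koszulWedge_self, smul_zero, add_zero,
    koszulAvoid_koszulD hj]

variable {S : Finset ι} {p : ℤ} {f : Finset ι → M}

theorem koszulWedge_mem_koszulCochains {k : ι} (hk : k ∈ S) (hf : f ∈ koszulCochains R M S p) :
    koszulWedge R k f ∈ koszulCochains R M S (p + 1) := by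
  intro s hs
  rw [koszulWedge_apply]
  split_ifs with hks
  · rw [hf, smul_zero]
    rintro ⟨hsub, hcard⟩
    refine hs ⟨?_, ?_⟩
    · rw [← Finset.insert_erase hks]
      exact Finset.insert_subset hk hsub
    · rw [← hcard, ← Finset.card_erase_add_one hks, Nat.cast_succ]
  · rfl

theorem koszulContract_mem_koszulCochains (k : ι) (hf : f ∈ koszulCochains R M S p) :
    koszulContract R k f ∈ koszulCochains R M S (p - 1) := by
  intro s hs
  rw [koszulContract_apply]
  split_ifs with hks
  · rfl
  · rw [hf, smul_zero]
    rintro ⟨hsub, hcard⟩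
    refine hs ⟨(Finset.subset_insert k s).trans hsub, ?_⟩
    rw [← hcard, Finset.card_insert_of_notMem hks, Nat.cast_succ, add_sub_cancel_right]

theorem koszulD_mem_koszulCochains (y : ι → R) (hf : f ∈ koszulCochains R M S p) :
    koszulD S y f ∈ koszulCochains R M S (p + 1) := by
  rw [koszulD_apply]
  exact Submodule.sum_mem _ fun k hk =>
    Submodule.smul_mem _ _ (koszulWedge_mem_koszulCochains hk hf)

theorem koszulAvoid_mem_koszulCochains {j : ι} (hf : f ∈ koszulCochains R M (insert j S) p) :
    koszulAvoid R j f ∈ koszulCochains R M S p := by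
  intro s hs
  rw [koszulAvoid_apply]
  split_ifs with hjs
  · rfl
  · exact hf s fun hs' => hs ⟨(Finset.subset_insert_iff_of_notMem hjs).1 hs'.1, hs'.2⟩

theorem koszulAvoid_eq_self {j : ι} (hj : j ∉ S) (hf : f ∈ koszulCochains R M S p) :
    koszulAvoid R j f = f := by
  funext s
  rw [koszulAvoid_apply]
  split_ifs with hjs
  · exact (hf s fun hs' => hj (hs'.1 hjs)).symm
  · rfl

end KoszulOperators

section Independence

theorem exists_pow_mem_span_pow_image {ι : Type*} {x : ι → R} {T : Set ι} {a : R}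
    (ha : a ∈ Ideal.span (x '' T)) (u : ℕ) : ∃ e : ℕ, a ^ e ∈ Ideal.span ((x ^ u) '' T) := by
  suffices h : Ideal.span (x '' T) ≤ (Ideal.span ((x ^ u) '' T)).radical from h ha
  rw [Ideal.span_le]
  rintro _ ⟨k, hk, rfl⟩
  exact ⟨u, Ideal.subset_span ⟨k, hk, rfl⟩⟩

variable {ι : Type*} [LinearOrder ι] {M : Type*} [AddCommGroup M] [Module R M]
  {S : Finset ι} {j : ι} {x y : ι → R}

theorem koszulD_koszulContract {z : Finset ι → M} (hz : koszulD S y z = 0) (hj : j ∈ S) :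
    koszulD S y (koszulContract R j z) = y j • z := by
  simpa only [hz, map_zero, zero_add, hj, if_true] using koszulContract_koszulD_add S y j z

theorem exists_koszulD_eq_smul {z : Finset ι → M} (hz : koszulD S y z = 0) {c : R}
    (hc : c ∈ Ideal.span (y '' S)) :
    ∃ q, koszulD S y q = c • z ∧
      ∀ p : ℤ, z ∈ koszulCochains R M S p → q ∈ koszulCochains R M S (p - 1) := by
  induction hc using Submodule.span_induction with
  | mem c hc =>
    obtain ⟨k, hk, rfl⟩ := hc
    exact ⟨koszulContract R k z, koszulD_koszulContract hz hk, fun _ hzp =>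
      koszulContract_mem_koszulCochains k hzp⟩
  | zero => exact ⟨0, by rw [map_zero, zero_smul], fun _ _ => Submodule.zero_mem _⟩
  | add a b _ _ iha ihb =>
    obtain ⟨q, hq, hqp⟩ := iha
    obtain ⟨q', hq', hqp'⟩ := ihb
    exact ⟨q + q', by rw [map_add, hq, hq', add_smul], fun p hzp =>
      Submodule.add_mem _ (hqp p hzp) (hqp' p hzp)⟩
  | smul r a _ ih =>
    obtain ⟨q, hq, hqp⟩ := ih
    exact ⟨r • q, by rw [map_smul, hq, smul_assoc], fun p hzp =>
      Submodule.smul_mem _ r (hqp p hzp)⟩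

theorem koszulD_insert_koszulWedge (hj : j ∉ S) (y : ι → R) (f : Finset ι → M) :
    koszulD (insert j S) y (koszulWedge R j f) = -koszulWedge R j (koszulD S y f) := by
  rw [koszulD_insert hj, koszulD_koszulWedge, koszulWedge_self, smul_zero, add_zero]

theorem koszulD_insert_add_koszulWedge_eq_zero (hj : j ∉ S) {z q : Finset ι → M}
    (hz : koszulD S y z = 0) (hq : koszulD S y q = y j • z) :
    koszulD (insert j S) y (z + koszulWedge R j q) = 0 := by
  rw [map_add, koszulD_insert_koszulWedge hj, koszulD_insert hj, hz, hq, map_smul, zero_add,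
    add_neg_cancel]

theorem koszulD_koszulContract_eq_zero (hj : j ∉ S) {f : Finset ι → M}
    (hf : koszulD (insert j S) y f = 0) (havoid : koszulAvoid R j f = 0) :
    koszulD S y (koszulContract R j f) = 0 := by
  have hcontract : koszulContract R j (koszulD S y f) = 0 := by
    simpa only [koszulD_insert hj, map_add, map_smul, koszulContract_koszulWedge_self, havoid,
      smul_zero, add_zero, map_zero] using congrArg (koszulContract R j) hf
  simpa only [hcontract, zero_add, hj, if_false] using koszulContract_koszulD_add S y j f

theorem exists_koszulScale_koszulWedge_eq_koszulD (hj : j ∉ S) (hx : x j ∈ Ideal.span (x '' S))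
    {u : ℕ} {m : Finset ι → M} (hm : koszulD S (x ^ u) m = 0) :
    ∃ (e : ℕ) (g : Finset ι → M),
      koszulScale (x ^ e) (koszulWedge R j m) = koszulD (insert j S) (x ^ (e + u)) g := by
  obtain ⟨e, he⟩ := exists_pow_mem_span_pow_image hx u
  obtain ⟨q, hq, -⟩ := exists_koszulD_eq_smul hm he
  refine ⟨e, -koszulWedge R j (koszulScale (x ^ e) q), ?_⟩
  calc koszulScale (x ^ e) (koszulWedge R j m)
      = koszulWedge R j (koszulScale (x ^ e) (x j ^ e • m)) := by
        rw [koszulScale_koszulWedge, map_smul, map_smul, Pi.pow_apply]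
    _ = koszulWedge R j (koszulD S (x ^ (e + u)) (koszulScale (x ^ e) q)) := by
        rw [← hq, koszulScale_koszulD, pow_add]
    _ = koszulD (insert j S) (x ^ (e + u)) (-koszulWedge R j (koszulScale (x ^ e) q)) := by
        rw [map_neg, koszulD_insert_koszulWedge hj, neg_neg]

theorem exists_koszulScale_eq_koszulD_insert (hj : j ∉ S) (hx : x j ∈ Ideal.span (x '' S))
    {u : ℕ} {f g : Finset ι → M} (hf : koszulD (insert j S) (x ^ u) f = 0)
    (hfg : koszulAvoid R j f = koszulD S (x ^ u) (koszulAvoid R j g)) :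
    ∃ (e : ℕ) (g' : Finset ι → M),
      koszulScale (x ^ e) f = koszulD (insert j S) (x ^ (e + u)) g' := by
  set f₀ := f - koszulD (insert j S) (x ^ u) g with hf₀
  have hcocycle : koszulD (insert j S) (x ^ u) f₀ = 0 := by
    rw [hf₀, map_sub, hf, koszulD_koszulD, sub_zero]
  have havoid : koszulAvoid R j f₀ = 0 := by
    rw [hf₀, map_sub, hfg, koszulAvoid_koszulD_insert hj, sub_self]
  have hwedge : koszulWedge R j (koszulContract R j f₀) = f₀ := by
    simpa only [havoid, zero_add] using koszulAvoid_add_koszulWedge_koszulContract (R := R) j f₀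
  obtain ⟨e, g', hg'⟩ := exists_koszulScale_koszulWedge_eq_koszulD hj hx
    (koszulD_koszulContract_eq_zero hj hcocycle havoid)
  refine ⟨e, g' + koszulScale (x ^ e) g, ?_⟩
  rw [map_add, ← hg', hwedge, pow_add, ← koszulScale_koszulD, ← map_add, hf₀, sub_add_cancel]

/-- Surjectivity of the canonical map `λ^p` for the subfamily `x_k`, `k ∈ S`, in terms of
cochains: every cocycle for `x^(u+1)` agrees with the image of a cocycle for `x` up to a
coboundary after passing to a larger exponent. The cochains `z'` and `g` are not required to be
homogeneous, since only their components in the relevant degree matter. -/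
def LambdaSurjOn (M : Type*) [AddCommGroup M] [Module R M] (x : ι → R) (S : Finset ι)
    (p : ℤ) : Prop :=
  ∀ u : ℕ, ∀ z ∈ koszulCochains R M S p, koszulD S (x ^ (u + 1)) z = 0 →
    ∃ (e : ℕ) (z' g : Finset ι → M), koszulD S x z' = 0 ∧
      koszulScale (x ^ e) z - koszulScale (x ^ (e + u)) z' = koszulD S (x ^ (e + u + 1)) g

theorem LambdaSurjOn.of_insert {p : ℤ} (hj : j ∉ S) (hx : x j ∈ Ideal.span (x '' S))
    (h : LambdaSurjOn M x (insert j S) p) : LambdaSurjOn M x S p := by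
  intro u z hz hdz
  obtain ⟨e, he⟩ := exists_pow_mem_span_pow_image hx (u + 1)
  have he' : x j ^ (e + (u + 1)) ∈ Ideal.span ((x ^ (u + 1)) '' S) := by
    rw [pow_add (x j)]
    exact Ideal.mul_mem_right _ _ he
  obtain ⟨q, hq, hqp⟩ := exists_koszulD_eq_smul hdz he'
  set Z := koszulScale (x ^ e) z + koszulWedge R j (koszulScale (x ^ e) q) with hZ
  have hZmem : Z ∈ koszulCochains R M (insert j S) p := by
    refine Submodule.add_mem _
      (koszulScale_mem_koszulCochains _ (koszulCochains_mono (Finset.subset_insert j S) hz)) ?_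
    simpa only [sub_add_cancel] using
      koszulWedge_mem_koszulCochains (Finset.mem_insert_self j S)
        (koszulScale_mem_koszulCochains (x ^ e)
          (koszulCochains_mono (Finset.subset_insert j S) (hqp p hz)))
  have hdZ : koszulD (insert j S) (x ^ (e + u + 1)) Z = 0 := by
    refine koszulD_insert_add_koszulWedge_eq_zero hj ?_ ?_
    · rw [add_assoc, pow_add, ← koszulScale_koszulD, hdz, map_zero]
    · rw [add_assoc, Pi.pow_apply, pow_add x, ← koszulScale_koszulD, hq, map_smul]
  have havoid : koszulAvoid R j Z = koszulScale (x ^ e) z := by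
    rw [hZ, map_add, koszulAvoid_koszulWedge_self, add_zero, koszulAvoid_koszulScale,
      koszulAvoid_eq_self hj hz]
  obtain ⟨e', Z', G, hZ', hG⟩ := h (e + u) Z hZmem hdZ
  refine ⟨e' + e, koszulAvoid R j Z', koszulAvoid R j G, ?_, ?_⟩
  · rw [← koszulAvoid_koszulD_insert hj, hZ', map_zero]
  · rw [add_assoc e' e u, ← koszulAvoid_koszulD_insert hj, ← hG, map_sub, koszulAvoid_koszulScale,
      koszulAvoid_koszulScale, havoid, koszulScale_koszulScale, pow_add x e' e]

protected theorem LambdaSurjOn.insert {p : ℤ} (hj : j ∉ S) (hx : x j ∈ Ideal.span (x '' S))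
    (h : LambdaSurjOn M x S p) : LambdaSurjOn M x (insert j S) p := by
  intro u Z hZ hdZ
  obtain ⟨e, z', g, hz', hg⟩ := h u (koszulAvoid R j Z) (koszulAvoid_mem_koszulCochains hZ)
    (by rw [← koszulAvoid_koszulD_insert hj, hdZ, map_zero])
  obtain ⟨q, hq, -⟩ := exists_koszulD_eq_smul hz' hx
  set Z' := z' + koszulWedge R j q with hZ'
  have hdZ' : koszulD (insert j S) x Z' = 0 := koszulD_insert_add_koszulWedge_eq_zero hj hz' hq
  set f := koszulScale (x ^ e) Z - koszulScale (x ^ (e + u)) Z' with hf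
  have hdf : koszulD (insert j S) (x ^ (e + u + 1)) f = 0 := by
    rw [hf, map_sub, pow_succ, ← koszulScale_koszulD, hdZ', ← pow_succ, add_assoc, pow_add,
      ← koszulScale_koszulD, hdZ, map_zero, map_zero, sub_zero]
  have havoid : koszulAvoid R j f = koszulD S (x ^ (e + u + 1)) (koszulAvoid R j g) := by
    rw [← koszulAvoid_koszulD hj, ← hg, hf, hZ']
    simp only [map_sub, map_add, koszulAvoid_koszulScale, koszulAvoid_koszulAvoid,
      koszulAvoid_koszulWedge_self, map_zero, add_zero]
  obtain ⟨e', G, hG⟩ := exists_koszulScale_eq_koszulD_insert hj hx hdf havoid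
  refine ⟨e' + e, Z', G, hdZ', ?_⟩
  rw [add_assoc e' e u, add_assoc e' (e + u) 1, ← hG, hf, map_sub, koszulScale_koszulScale,
    koszulScale_koszulScale, ← pow_add, ← pow_add]

theorem lambdaSurjOn_union_iff {T : Finset ι} (p : ℤ)
    (hT : ∀ j ∈ T, x j ∈ Ideal.span (x '' S)) :
    LambdaSurjOn M x (T ∪ S) p ↔ LambdaSurjOn M x S p := by
  induction T using Finset.induction_on with
  | empty => rw [Finset.empty_union]
  | insert j T _ ih =>
    rw [Finset.insert_union, ← ih fun k hk => hT k (Finset.mem_insert_of_mem hk)]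
    by_cases hj : j ∈ T ∪ S
    · rw [Finset.insert_eq_of_mem hj]
    · have hx : x j ∈ Ideal.span (x '' ↑(T ∪ S)) :=
        Ideal.span_mono (Set.image_mono (Finset.coe_subset.2 Finset.subset_union_right))
          (hT j (Finset.mem_insert_self j T))
      exact ⟨.of_insert hj hx, .insert hj hx⟩

end Independence

section KoszulLimit

variable {M : Type} [AddCommGroup M] [Module R M] {n p : ℕ} {x : Fin n → R}

theorem castHk_mk {y z : Fin n → R} (h : y = z) {f : KM M n p} (hf : f ∈ kZ y M p) :
    castHk M p h (Submodule.Quotient.mk ⟨f, hf⟩) = Submodule.Quotient.mk ⟨f, h ▸ hf⟩ := by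
  subst h
  rfl

theorem ktH_mk {u v : ℕ} (h : u ≤ v) {f : KM M n p} (hf : f ∈ kZ (fun j => x j ^ (u + 1)) M p) :
    ktH x M p u v h (Submodule.Quotient.mk ⟨f, hf⟩)
      = Submodule.Quotient.mk ⟨kt x (v - u) p f, kt_mem_kZ x h p f hf⟩ :=
  rfl

theorem kt_kt (x : Fin n → R) (e e' : ℕ) (f : KM M n p) :
    kt x e p (kt x e' p f) = kt x (e + e') p f := by
  funext s
  simp only [kt, LinearMap.coe_mk, AddHom.coe_mk, smul_smul, pow_add]

theorem kt_zero (x : Fin n → R) (f : KM M n p) : kt x 0 p f = f := by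
  funext s
  simp only [kt, LinearMap.coe_mk, AddHom.coe_mk, pow_zero, one_smul]

instance ktH_directedSystem (x : Fin n → R) (p : ℕ) :
    DirectedSystem (fun u : ℕ => Hk (fun j => x j ^ (u + 1)) M p)
      (fun u v h => ktH x M p u v h) where
  map_self u q := by
    obtain ⟨⟨f, hf⟩, rfl⟩ := Submodule.Quotient.mk_surjective _ q
    simp only [ktH_mk, Nat.sub_self, kt_zero]
  map_map u v w huv hvw q := by
    obtain ⟨⟨f, hf⟩, rfl⟩ := Submodule.Quotient.mk_surjective _ q
    simp only [ktH_mk, kt_kt, Nat.sub_add_sub_cancel hvw huv]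

/-- The class in `H^p_{⟨x⟩}(M)` of a Koszul cocycle `z` for `x^(u+1)`. -/
def KLoc.mk (x : Fin n → R) (u : ℕ) {z : KM M n p} (hz : z ∈ kZ (fun j => x j ^ (u + 1)) M p) :
    KLoc x M p :=
  Module.DirectLimit.of R ℕ (fun u : ℕ => Hk (fun j => x j ^ (u + 1)) M p)
    (fun u v h => ktH x M p u v h) u (Submodule.Quotient.mk ⟨z, hz⟩)

theorem KLoc.exists_mk_eq (c : KLoc x M p) :
    ∃ (u : ℕ) (z : KM M n p) (hz : z ∈ kZ (fun j => x j ^ (u + 1)) M p), KLoc.mk x u hz = c := by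
  obtain ⟨u, q, rfl⟩ := Module.DirectLimit.exists_of c
  obtain ⟨⟨z, hz⟩, rfl⟩ := Submodule.Quotient.mk_surjective _ q
  exact ⟨u, z, hz, rfl⟩

theorem KLoc.mk_kt {u v : ℕ} (h : u ≤ v) {z : KM M n p}
    (hz : z ∈ kZ (fun j => x j ^ (u + 1)) M p) :
    KLoc.mk x v (kt_mem_kZ x h p z hz) = KLoc.mk x u hz := by
  rw [KLoc.mk, ← ktH_mk h hz, Module.DirectLimit.of_f, KLoc.mk]

theorem Hk.mk_eq_mk_iff {y : Fin n → R} {z w : KM M n p} (hz : z ∈ kZ y M p)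
    (hw : w ∈ kZ y M p) :
    (Submodule.Quotient.mk ⟨z, hz⟩ : Hk y M p) = Submodule.Quotient.mk ⟨w, hw⟩
      ↔ z - w ∈ kB y M p := by
  rw [Submodule.Quotient.eq, Submodule.mem_comap, Submodule.mem_inf]
  exact and_iff_left (Submodule.sub_mem _ hz hw)

theorem KLoc.mk_eq_mk_iff {u : ℕ} {z w : KM M n p} (hz : z ∈ kZ (fun j => x j ^ (u + 1)) M p)
    (hw : w ∈ kZ (fun j => x j ^ (u + 1)) M p) :
    KLoc.mk x u hz = KLoc.mk x u hw ↔
      ∃ e : ℕ, kt x e p (z - w) ∈ kB (fun j => x j ^ (e + u + 1)) M p := by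
  constructor
  · intro h
    obtain ⟨v, huv, hv⟩ := Module.DirectLimit.exists_eq_of_of_eq h
    obtain ⟨e, rfl⟩ := Nat.exists_eq_add_of_le' huv
    rw [ktH_mk, ktH_mk, Hk.mk_eq_mk_iff, ← map_sub, Nat.add_sub_cancel_right] at hv
    exact ⟨e, hv⟩
  · rintro ⟨e, he⟩
    have hue : u ≤ e + u := Nat.le_add_left u e
    rw [← KLoc.mk_kt hue hz, ← KLoc.mk_kt hue hw, KLoc.mk, KLoc.mk,
      (Hk.mk_eq_mk_iff _ _).2 (by rwa [← map_sub, Nat.add_sub_cancel_right])]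

theorem klambda_mk (u : ℕ) {z : KM M n p} (hz : z ∈ kZ x M p) :
    ∃ hu : kt x u p z ∈ kZ (fun j => x j ^ (u + 1)) M p,
      klambda x M p (Submodule.Quotient.mk ⟨z, hz⟩) = KLoc.mk x u hu := by
  have hpow : x = fun j => x j ^ (0 + 1) := funext fun j => by rw [zero_add, pow_one]
  have hz₀ : z ∈ kZ (fun j => x j ^ (0 + 1)) M p := hpow ▸ hz
  refine ⟨kt_mem_kZ x (Nat.zero_le u) p z hz₀, ?_⟩
  rw [klambda, LinearMap.comp_apply, castHk_mk]
  exact (KLoc.mk_kt (Nat.zero_le u) hz₀).symm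

theorem lambdaSurj_iff (x : Fin n → R) (p : ℕ) :
    LambdaSurj x M p ↔ ∀ u : ℕ, ∀ z ∈ kZ (fun j => x j ^ (u + 1)) M p,
      ∃ e : ℕ, ∃ z' ∈ kZ x M p,
        kt x e p z - kt x (e + u) p z' ∈ kB (fun j => x j ^ (e + u + 1)) M p := by
  constructor
  · intro h u z hz
    obtain ⟨q, hq⟩ := h (KLoc.mk x u hz)
    obtain ⟨⟨z', hz'⟩, rfl⟩ := Submodule.Quotient.mk_surjective _ q
    obtain ⟨hu, hmk⟩ := klambda_mk u hz'
    obtain ⟨e, he⟩ := (KLoc.mk_eq_mk_iff hz hu).1 (hq.symm.trans hmk)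
    rw [map_sub, kt_kt] at he
    exact ⟨e, z', hz', he⟩
  · intro h c
    obtain ⟨u, z, hz, rfl⟩ := c.exists_mk_eq
    obtain ⟨e, z', hz', he⟩ := h u z hz
    obtain ⟨hu, hmk⟩ := klambda_mk u hz'
    rw [← kt_kt, ← map_sub] at he
    exact ⟨_, hmk.trans ((KLoc.mk_eq_mk_iff hz hu).2 ⟨e, he⟩).symm⟩

end KoszulLimit

section Subfamily

variable {ι : Type*} [LinearOrder ι] {M : Type} [AddCommGroup M] [Module R M] {n : ℕ}
  (φ : Fin n ↪o ι)

/-- The image of `φ` as a finset, selecting the subfamily `x ∘ φ` of a family `x` on `ι`. -/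
def indexImage : Finset ι := Finset.univ.map φ.toEmbedding

/-- The degree `p` part of a cochain on `ι`, restricted to the subfamily selected by `φ`. -/
def koszulRestrict (R : Type) [CommRing R] [Module R M] (p : ℕ) :
    (Finset ι → M) →ₗ[R] KM M n p :=
  LinearMap.funLeft R M fun t => t.1.map φ.toEmbedding

/-- Extension by zero of a cochain on the subfamily selected by `φ`, a section of
`koszulRestrict`. -/
def koszulExtend {p : ℕ} (f : KM M n p) : Finset ι → M :=
  Function.extend (fun t => t.1.map φ.toEmbedding) f 0

theorem image_indexImage {α : Type*} (x : ι → α) : x '' indexImage φ = Set.range (x ∘ φ) := by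
  rw [indexImage, Finset.coe_map, Finset.coe_univ, Set.image_univ, ← Set.range_comp]
  rfl

variable {p : ℕ}

theorem koszulRestrict_koszulExtend (f : KM M n p) :
    koszulRestrict φ R p (koszulExtend φ f) = f := by
  have hinj : Function.Injective
      fun t : {t : Finset (Fin n) // t.card = p} => t.1.map φ.toEmbedding :=
    (Finset.map_injective _).comp Subtype.val_injective
  exact funext fun t => hinj.extend_apply f 0 t

theorem koszulExtend_mem_koszulCochains (f : KM M n p) :
    koszulExtend φ f ∈ koszulCochains R M (indexImage φ) p := by
  intro s hs
  refine Function.extend_apply' _ _ _ ?_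
  rintro ⟨t, rfl⟩
  exact hs ⟨Finset.map_subset_map.2 (Finset.subset_univ _), by rw [Finset.card_map, t.2]⟩

variable {φ} {F : Finset ι → M}

theorem eq_zero_of_koszulRestrict_eq_zero (hF : F ∈ koszulCochains R M (indexImage φ) p)
    (h : koszulRestrict φ R p F = 0) : F = 0 := by
  funext s
  by_cases hs : s ⊆ indexImage φ ∧ (s.card : ℤ) = p
  · obtain ⟨hsub, hcard⟩ := hs
    obtain ⟨t, -, rfl⟩ := Finset.subset_map_iff.1 hsub
    rw [Finset.card_map, Nat.cast_inj] at hcard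
    exact congrFun h ⟨t, hcard⟩
  · exact hF s hs

theorem koszulRestrict_koszulScale (x : ι → R) (e : ℕ) (F : Finset ι → M) :
    koszulRestrict φ R p (koszulScale (x ^ e) F) = kt (x ∘ φ) e p (koszulRestrict φ R p F) := by
  funext t
  simp only [koszulRestrict, LinearMap.funLeft_apply, koszulScale_apply, kt, LinearMap.coe_mk,
    AddHom.coe_mk, Finset.prod_map, Pi.pow_apply, Finset.prod_pow, Function.comp_apply,
    RelEmbedding.coe_toEmbedding]

theorem koszulSign_map (k : Fin n) (t : Finset (Fin n)) :
    koszulSign R (φ.toEmbedding k) (t.map φ.toEmbedding) = koszulSign R k t := by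
  simp only [koszulSign, Finset.filter_map, Finset.card_map, Function.comp_def,
    RelEmbedding.coe_toEmbedding, OrderEmbedding.lt_iff_lt]

theorem koszulRestrict_koszulD (y : ι → R) (F : Finset ι → M) :
    koszulRestrict φ R (p + 1) (koszulD (indexImage φ) y F)
      = kd (y ∘ φ) p (koszulRestrict φ R p F) := by
  funext ⟨t, ht⟩
  simp only [koszulRestrict, LinearMap.funLeft_apply, koszulD_apply, Finset.sum_apply,
    Pi.smul_apply, koszulWedge_apply, indexImage, Finset.sum_map, kd, LinearMap.coe_mk,
    AddHom.coe_mk, Finset.mem_map', smul_ite, smul_zero, Function.comp_apply]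
  rw [Finset.sum_attach t fun j => ((-1 : R) ^ (t.filter (· < j)).card * y (φ j)) •
      F ((t.erase j).map φ.toEmbedding), ← Finset.sum_filter, Finset.filter_mem_eq_inter,
    Finset.univ_inter]
  refine Finset.sum_congr rfl fun j _ => ?_
  rw [smul_smul, koszulSign_map, Finset.map_erase, mul_comm]
  rfl

theorem koszulRestrict_mem_kZ {y : ι → R} (h : koszulD (indexImage φ) y F = 0) :
    koszulRestrict φ R p F ∈ kZ (y ∘ φ) M p := by
  rw [kZ, LinearMap.mem_ker, ← koszulRestrict_koszulD, h, map_zero]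

theorem koszulD_koszulExtend_eq_zero {y : ι → R} {f : KM M n p} (hf : f ∈ kZ (y ∘ φ) M p) :
    koszulD (indexImage φ) y (koszulExtend φ f) = 0 := by
  refine eq_zero_of_koszulRestrict_eq_zero (R := R) (φ := φ) (p := p + 1) ?_ ?_
  · rw [Nat.cast_succ]
    exact koszulD_mem_koszulCochains y (koszulExtend_mem_koszulCochains φ f)
  · rw [koszulRestrict_koszulD, koszulRestrict_koszulExtend]
    exact hf

theorem koszulRestrict_koszulD_mem_kB (y : ι → R) (F : Finset ι → M) :
    koszulRestrict φ R p (koszulD (indexImage φ) y F) ∈ kB (y ∘ φ) M p := by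
  cases p with
  | zero =>
    refine (Submodule.mem_bot R).2 (funext fun ⟨t, ht⟩ => ?_)
    obtain rfl := Finset.card_eq_zero.1 ht
    simp [koszulRestrict, LinearMap.funLeft_apply, koszulD_apply, koszulWedge_apply]
  | succ q => exact ⟨_, (koszulRestrict_koszulD y F).symm⟩

theorem exists_koszulD_eq_of_koszulRestrict_mem_kB {y : ι → R}
    (hF : F ∈ koszulCochains R M (indexImage φ) p)
    (h : koszulRestrict φ R p F ∈ kB (y ∘ φ) M p) : ∃ G, F = koszulD (indexImage φ) y G := by
  cases p with
  | zero => exact ⟨0, by rw [map_zero, eq_zero_of_koszulRestrict_eq_zero hF h]⟩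
  | succ q =>
    obtain ⟨g, hg⟩ := h
    refine ⟨koszulExtend φ g, sub_eq_zero.1 (eq_zero_of_koszulRestrict_eq_zero
      (Submodule.sub_mem _ hF ?_) ?_)⟩
    · rw [Nat.cast_succ]
      exact koszulD_mem_koszulCochains y (koszulExtend_mem_koszulCochains φ g)
    · rw [map_sub, koszulRestrict_koszulD, koszulRestrict_koszulExtend, hg, sub_self]

theorem lambdaSurj_iff_lambdaSurjOn (φ : Fin n ↪o ι) (x : ι → R) (p : ℕ) :
    LambdaSurj (x ∘ φ) M p ↔ LambdaSurjOn M x (indexImage φ) p := by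
  rw [lambdaSurj_iff]
  constructor
  · intro h u z hz hdz
    obtain ⟨e, z', hz', hB⟩ := h u (koszulRestrict φ R p z) 
      (koszulRestrict_mem_kZ (y := x ^ (u + 1)) hdz)
    have hrestrict : koszulRestrict φ R p (koszulScale (x ^ e) z -
        koszulScale (x ^ (e + u)) (koszulExtend φ z')) ∈ kB ((x ^ (e + u + 1)) ∘ φ) M p := by
      rw [map_sub, koszulRestrict_koszulScale, koszulRestrict_koszulScale,
        koszulRestrict_koszulExtend]
      exact hB
    obtain ⟨g, hg⟩ := exists_koszulD_eq_of_koszulRestrict_mem_kB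
      (Submodule.sub_mem _ (koszulScale_mem_koszulCochains (x ^ e) hz)
        (koszulScale_mem_koszulCochains (x ^ (e + u)) (koszulExtend_mem_koszulCochains φ z')))
      hrestrict
    exact ⟨e, koszulExtend φ z', g, koszulD_koszulExtend_eq_zero hz', hg⟩
  · intro h u z hz
    obtain ⟨e, z', g, hz', hg⟩ := h u (koszulExtend φ z) (koszulExtend_mem_koszulCochains φ z)
      (koszulD_koszulExtend_eq_zero (y := x ^ (u + 1)) hz)
    refine ⟨e, koszulRestrict φ R p z', koszulRestrict_mem_kZ hz', ?_⟩
    have hB := koszulRestrict_koszulD_mem_kB (φ := φ) (p := p) (x ^ (e + u + 1)) g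
    rw [← hg, map_sub, koszulRestrict_koszulScale, koszulRestrict_koszulScale,
      koszulRestrict_koszulExtend] at hB
    exact hB

end Subfamily

theorem lambdaSurj_iff_of_span_eq {M : Type} [AddCommGroup M] [Module R M] {s t : ℕ}
    {a : Fin s → R} {b : Fin t → R}
    (hab : Ideal.span (Set.range a) = Ideal.span (Set.range b)) (p : ℕ) :
    LambdaSurj a M p ↔ LambdaSurj b M p := by
  set x : Fin (s + t) → R := Fin.append a b
  set φ : Fin s ↪o Fin (s + t) := Fin.castAddOrderEmb t
  set ψ : Fin t ↪o Fin (s + t) := Fin.natAddOrderEmb s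
  have ha : x ∘ φ = a := funext fun i => Fin.append_left a b i
  have hb : x ∘ ψ = b := funext fun i => Fin.append_right a b i
  have hspan : Ideal.span (x '' indexImage φ) = Ideal.span (x '' indexImage ψ) := by
    rw [image_indexImage, image_indexImage, ha, hb, hab]
  calc LambdaSurj a M p
      ↔ LambdaSurjOn M x (indexImage φ) p := by rw [← lambdaSurj_iff_lambdaSurjOn, ha]
    _ ↔ LambdaSurjOn M x (indexImage ψ ∪ indexImage φ) p :=
        (lambdaSurjOn_union_iff _ fun j hj => hspan ▸ Ideal.subset_span ⟨j, hj, rfl⟩).symm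
    _ ↔ LambdaSurjOn M x (indexImage φ ∪ indexImage ψ) p := by rw [Finset.union_comm]
    _ ↔ LambdaSurjOn M x (indexImage ψ) p :=
        lambdaSurjOn_union_iff _ fun j hj => hspan ▸ Ideal.subset_span ⟨j, hj, rfl⟩
    _ ↔ LambdaSurj b M p := by rw [← lambdaSurj_iff_lambdaSurjOn, hb]

theorem theorem_4_2_i_ii_general [IsNoetherianRing R] (I : Ideal R)
    (M : Type) [AddCommGroup M] [Module R M] [Module.Finite R M] (D : Set ℕ) :
    (∀ (t : ℕ) (b : Fin t → R), Ideal.span (Set.range b) = I →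
        ∀ i ∈ D, LambdaSurj b M i) ↔
      (∃ (s : ℕ) (a : Fin s → R), Ideal.span (Set.range a) = I ∧
        IsUncondFilterRegSeq I M a ∧ ∀ i ∈ D, LambdaSurj a M i) := by
  constructor
  · intro h
    obtain ⟨s, a, hspan, hreg⟩ := exists_span_eq_isUncondFilterRegSeq I M
    exact ⟨s, a, hspan, hreg, h s a hspan⟩
  · rintro ⟨s, a, hspan, -, ha⟩ t b hb i hi
    exact (lambdaSurj_iff_of_span_eq (hspan.trans hb.symm) i).1 (ha i hi)

/-- **Theorem 4.2, (i) ⟺ (ii).** Suppose `c := cd(I,M) = ara(I,M) > 0`. Then the canonical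
map `λ^i_M : H^i(b₁,…,b_t; M) → H^i_I(M)` is surjective for all `0 ≤ i ≤ c-1` for every
generating set `{b₁,…,b_t}` of `I` if and only if there exists an f-generating set
`{a₁,…,a_s}` of `I` with respect to `M` for which `λ^i_M` is surjective for all
`0 ≤ i ≤ c-1`. -/
theorem theorem_4_2_i_ii [IsNoetherianRing R] (I : Ideal R)
    (M : Type) [AddCommGroup M] [Module R M] [Module.Finite R M]
    (c : ℕ) (hc : IsCd I M c) (ha : IsAra I M c) (hpos : 0 < c) :
    (∀ (t : ℕ) (b : Fin t → R), Ideal.span (Set.range b) = I →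
        ∀ i : ℕ, i < c → LambdaSurj b M i) ↔
      (∃ (s : ℕ) (a : Fin s → R), Ideal.span (Set.range a) = I ∧
        IsUncondFilterRegSeq I M a ∧ ∀ i : ℕ, i < c → LambdaSurj a M i) :=
  theorem_4_2_i_ii_general I M (Set.Iio c)
end
end
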